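/- Claim in the proof of Theorem A: Assume (H1), (H2) and (H3). Then the complement M = X ∖ 𝔠_P of the set 𝔠_P = {x ∈ X : ω(x) is a linearly stable cycle} satisfies M ⊆ U_+ ∩ U_−; that is, every point x ∈ X whose ω-limit set is not a linearly stable cycle lies in both the upper and the lower ω-unstable sets. -/

import Mathlib

open Set Topology Filter MeasureTheory Function

universe u

variable {E : Type u} [NormedAddCommGroup E] [NormedSpace ℝ E]
  [MeasurableSpace E] [BorelSpace E]

/-- `x ≤ y` in the order induced by the cone `K`. -/
def coneLE (K : Set E) (x y : E) : Prop := y - x ∈ K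

/-- `x < y` in the order induced by the cone `K`. -/
def coneLT (K : Set E) (x y : E) : Prop := coneLE K x y ∧ x ≠ y

/-- `x ≪ y` (strong ordering) induced by the cone `K`. -/
def coneLL (K : Set E) (x y : E) : Prop := y - x ∈ interior K

/-- `K` is a closed convex cone inducing a partial order. -/
def IsConeOrder (K : Set E) : Prop :=
  IsClosed K ∧ Convex ℝ K ∧
  (∀ x ∈ K, ∀ α : ℝ, 0 < α → α • x ∈ K) ∧
  (∀ x ∈ K, ∀ y ∈ K, x + y ∈ K) ∧
  K ∩ (-K) = {0}

/-- Closed order interval `[a,b]`. -/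
def ordCC (K : Set E) (a b : E) : Set E := {z | coneLE K a z ∧ coneLE K z b}

/-- Open order interval `[[a,b]]`. -/
def ordOO (K : Set E) (a b : E) : Set E := {z | coneLL K a z ∧ coneLL K z b}

/-- `X` is order-convex. -/
def OrderConvexSet (K X : Set E) : Prop :=
  ∀ a ∈ X, ∀ b ∈ X, coneLT K a b → ordCC K a b ⊆ X

/-- `F` is strongly monotone with respect to the cone `K`. -/
def StronglyMonotoneMap (K : Set E) (F : E → E) : Prop :=
  ∀ x y : E, coneLT K x y → coneLL K (F x) (F y)

/-- The semi-orbit `O⁺(x)` of `x` under `F`. -/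
def semiOrbit (F : E → E) (x : E) : Set E := {y | ∃ n : ℕ, y = F^[n] x}

/-- The ω-limit set of `x` under `F`. -/
def omegaSet (F : E → E) (x : E) : Set E := ⋂ k : ℕ, closure (semiOrbit F (F^[k] x))

/-- `F` is ω-compact in `S ⊆ X`. -/
def OmegaCompactIn (F : E → E) (X S : Set E) : Prop :=
  (∀ x ∈ S, IsCompact (closure (semiOrbit F x)) ∧ closure (semiOrbit F x) ⊆ X) ∧
  IsCompact (closure (⋃ x ∈ S, omegaSet F x)) ∧ closure (⋃ x ∈ S, omegaSet F x) ⊆ X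

/-- Hypothesis (H2): ω-compactness in every closed order interval of `X`. -/
def OmegaCompactIntervals (K : Set E) (F : E → E) (X : Set E) : Prop :=
  ∀ a ∈ X, ∀ b ∈ X, coneLE K a b → OmegaCompactIn F X (ordCC K a b)

/-- The upper ω-limit set `ω₊(x)`. -/
def omegaPlus (K : Set E) (F : E → E) (X : Set E) (x : E) : Set E :=
  ⋂ u ∈ {u ∈ X | coneLL K x u},
    closure (⋃ y ∈ {y ∈ X | coneLT K x y ∧ coneLE K y u}, omegaSet F y)

/-- The lower ω-limit set `ω₋(x)`. -/
def omegaMinus (K : Set E) (F : E → E) (X : Set E) (x : E) : Set E :=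
  ⋂ u ∈ {u ∈ X | coneLL K u x},
    closure (⋃ y ∈ {y ∈ X | coneLT K y x ∧ coneLE K u y}, omegaSet F y)

/-- The upper ω-unstable set `U₊`. -/
def Uplus (K : Set E) (F : E → E) (X : Set E) : Set E :=
  {x ∈ X | omegaPlus K F X x ≠ omegaSet F x}

/-- The lower ω-unstable set `U₋`. -/
def Uminus (K : Set E) (F : E → E) (X : Set E) : Set E :=
  {x ∈ X | omegaMinus K F X x ≠ omegaSet F x}

/-- `q` is a periodic point of `F` with minimal period `p ≥ 1`. -/
def IsMinPeriodicPt (F : E → E) (p : ℕ) (q : E) : Prop :=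
  1 ≤ p ∧ F^[p] q = q ∧ ∀ l : ℕ, 1 ≤ l → l < p → F^[l] q ≠ q

/-- `C` is a linearly stable cycle of `F`: the (semi-)orbit of a periodic point of some
minimal period `p` such that the spectral radius of the derivative of `F^[p]` at every
point of the cycle is at most `1`. -/
def IsLinearlyStableCycle (F : E → E) (C : Set E) : Prop :=
  ∃ (q : E) (p : ℕ), IsMinPeriodicPt F p q ∧ C = semiOrbit F q ∧
    ∀ z ∈ semiOrbit F q, ∃ L : E →L[ℝ] E,
      HasFDerivAt (F^[p]) L z ∧ spectralRadius ℝ L ≤ 1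

/-- Hypothesis (H3): `F` is C¹ and each derivative is a compact strongly positive operator. -/
def SmoothStronglyPositive (K : Set E) (F : E → E) : Prop :=
  ∃ F' : E → (E →L[ℝ] E), Continuous F' ∧ (∀ x : E, HasFDerivAt F (F' x) x) ∧
    (∀ x : E, IsCompactOperator ⇑(F' x)) ∧
    ∀ x v : E, coneLT K 0 v → coneLL K 0 (F' x v)

/-- A Borel set `W` is shy: there is a nonzero compactly supported Borel measure `μ` with
`μ (x + W) = 0` for every `x`. -/
def IsShyBorel (W : Set E) : Prop :=
  MeasurableSet W ∧ ∃ μ : Measure E, μ ≠ 0 ∧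
    (∃ Q : Set E, IsCompact Q ∧ μ Qᶜ = 0) ∧
    ∀ x : E, μ ((fun y => y - x) ⁻¹' W) = 0

/-- A set is shy if it is contained in a shy Borel set. -/
def IsShy (W : Set E) : Prop := ∃ W' : Set E, W ⊆ W' ∧ IsShyBorel W'

/-- `S` is prevalent in `A` if `A \ S` is shy. -/
def PrevalentIn (S A : Set E) : Prop := IsShy (A \ S)

/-- An order decomposition `(A, B')` of `X`: both nonempty, relatively closed in `X`,
`A` lower closed, `B'` upper closed, `A ∪ B' = X` and `int (A ∩ B') = ∅`. -/
def IsOrderDecomp (K X A B' : Set E) : Prop :=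
  A.Nonempty ∧ B'.Nonempty ∧ A ⊆ X ∧ B' ⊆ X ∧
  closure A ∩ X ⊆ A ∧ closure B' ∩ X ⊆ B' ∧
  (∀ a ∈ A, ∀ z ∈ X, coneLE K z a → z ∈ A) ∧
  (∀ b ∈ B', ∀ z ∈ X, coneLE K b z → z ∈ B') ∧
  A ∪ B' = X ∧ interior (A ∩ B') = ∅

/-- An invariant order decomposition of `X`. -/
def IsInvOrderDecomp (K X : Set E) (F : E → E) (A B' : Set E) : Prop :=
  IsOrderDecomp K X A B' ∧ F '' A ⊆ A ∧ F '' B' ⊆ B'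

/-- A set is unordered if it contains no two points `x < y`. -/
def UnorderedSet (K S : Set E) : Prop := ∀ x ∈ S, ∀ y ∈ S, ¬ coneLT K x y

/-- An invariant order resolution of `X`. -/
def IsInvOrderResolution (K X : Set E) (F : E → E) (Γ : Set (Set E × Set E)) : Prop :=
  (∀ p ∈ Γ, IsInvOrderDecomp K X F p.1 p.2) ∧
  (∀ p ∈ Γ, ∀ q ∈ Γ, p.1 ⊆ q.1 ∨ q.1 ⊆ p.1) ∧
  (∀ x ∈ X, UnorderedSet K (semiOrbit F x) → ∃ p ∈ Γ, semiOrbit F x ⊆ p.1 ∩ p.2)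

/-- Hypothesis (H4): the group `G` acts on `X` by an increasing, jointly continuous
action whose homeomorphisms commute with `F`. -/
def GroupActsOn {G : Type*} [Group G] [TopologicalSpace G]
    (K X : Set E) (F : E → E) (act : G → E → E) : Prop :=
  ContinuousOn (fun p : G × E => act p.1 p.2) (Set.univ ×ˢ X) ∧
  (∀ g : G, Set.MapsTo (act g) X X) ∧
  (∀ x ∈ X, act (1 : G) x = x) ∧
  (∀ g h : G, ∀ x ∈ X, act (g * h) x = act g (act h x)) ∧
  (∀ g : G, ∀ x ∈ X, ∀ y ∈ X, coneLE K x y → coneLE K (act g x) (act g y)) ∧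
  (∀ g : G, ∀ x ∈ X, act g (F x) = F (act g x))

/-- A set `S` is `G`-symmetric if every point of `S` is fixed by every group element. -/
def GSymmetricSet {G : Type*} (act : G → E → E) (S : Set E) : Prop :=
  ∀ z ∈ S, ∀ g : G, act g z = z

/-!
Fix `e` in the interior of the cone and let `x` be a point whose ω-limit set `Ω` is not a linearly
stable cycle. Products of `n` operators from a compact set of compact strongly positive operators
satisfy a Harnack inequality `T e ≥ c ‖T‖ e` and contract oscillations, so they map every vector
close to the line spanned by `T e`, up to a small multiple of `‖T‖`. If the derivatives of the
iterates were bounded at some `z ∈ Ω`, a point near `z` whose orbit is never strongly ordered with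
that of `z` would therefore be asymptotic to it. Applied to two points of the orbit of `x`, this
makes `Ω` a cycle, and the bounded derivatives give it spectral radius at most one.

Hence around each point of `Ω` some iterate doubles every small gap `s • e`, and for each `y > x`
the orbit of `y` infinitely often exceeds that of `x` by a gap `s₀ • e` independent of `y`.
Letting `y` decrease to `x` yields `ζ ∈ ω(x)` and `η ∈ ω₊(x)` with `ζ + s₀ • e ≤ η`, which excludes
`ω₊(x) = ω(x)` because no two points of an ω-limit set are strongly ordered. The case of `ω₋`
follows by replacing the cone `K` with `-K`.
-/

open scoped Pointwise

section StrongOrder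

variable {G : Type*} [AddCommGroup G] [PartialOrder G] [IsOrderedAddMonoid G]
  [TopologicalSpace G] [IsTopologicalAddGroup G] {a b x y : G}

theorem mem_interior_Ici_iff_sub : y ∈ interior (Ici x) ↔ y - x ∈ interior (Ici 0) := by
  have : (· - x) ⁻¹' Ici (0 : G) = Ici x := by ext; simp
  rw [← this, ← Homeomorph.coe_subRight, ← (Homeomorph.subRight x).preimage_interior]; rfl

theorem mem_interior_Ici_of_le (ha : a ∈ interior (Ici x)) (hab : a ≤ b) :
    b ∈ interior (Ici x) := by
  have : b ∈ interior (Ici (x + (b - a))) := by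
    rwa [mem_interior_Ici_iff_sub, show b - (x + (b - a)) = a - x by abel,
      ← mem_interior_Ici_iff_sub]
  exact interior_mono (Ici_subset_Ici.2 (le_add_of_nonneg_right (sub_nonneg.2 hab))) this

theorem isOpen_setOf_mem_interior_Ici : IsOpen {p : G × G | p.2 ∈ interior (Ici p.1)} := by
  have : {p : G × G | p.2 ∈ interior (Ici p.1)} = (fun p ↦ p.2 - p.1) ⁻¹' interior (Ici 0) :=
    Set.ext fun _ ↦ mem_interior_Ici_iff_sub
  exact this ▸ isOpen_interior.preimage (continuous_snd.sub continuous_fst)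

end StrongOrder

section OrderUnit

variable {V : Type*} [NormedAddCommGroup V] [NormedSpace ℝ V] [PartialOrder V] {e : V}

theorem smul_mem_interior_Ici_zero [IsOrderedModule ℝ V] {t : ℝ} (ht : 0 < t)
    (he : e ∈ interior (Ici 0)) : t • e ∈ interior (Ici 0) := by
  have : t • Ici (0 : V) ⊆ Ici 0 := by
    rintro _ ⟨v, hv, rfl⟩
    exact smul_nonneg ht.le hv
  exact interior_mono this (interior_smul₀ ht.ne' (Ici (0 : V)) ▸ smul_mem_smul_set he)

variable [IsOrderedAddMonoid V]

theorem exists_forall_smul_le_of_isCompact (e : V) {Q : Set V} (hQ : IsCompact Q)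
    (hQi : Q ⊆ interior (Ici 0)) : ∃ β > (0 : ℝ), ∀ q ∈ Q, β • e ≤ q := by
  obtain ⟨δ, hδ, hsub⟩ := hQ.exists_cthickening_subset_open isOpen_interior hQi
  refine ⟨δ / (‖e‖ + 1), by positivity, fun q hq ↦ ?_⟩
  have h_dist : dist (q - (δ / (‖e‖ + 1)) • e) q ≤ δ := by
    rw [dist_eq_norm, sub_sub_cancel_left, norm_neg, norm_smul,
      Real.norm_of_nonneg (by positivity), div_mul_eq_mul_div, div_le_iff₀ (by positivity)]
    gcongr
    linarith
  exact sub_nonneg.1 (interior_subset (hsub (Metric.mem_cthickening_of_dist_le _ q _ _ hq h_dist)))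

theorem exists_add_smul_le_of_mem_interior_Ici (e : V) {x y : V} (h : y ∈ interior (Ici x)) :
    ∃ s > (0 : ℝ), x + s • e ≤ y := by
  obtain ⟨s, hs, hle⟩ := exists_forall_smul_le_of_isCompact e (Q := {y - x}) isCompact_singleton
    (singleton_subset_iff.2 (mem_interior_Ici_iff_sub.1 h))
  exact ⟨s, hs, le_sub_iff_add_le'.1 (hle _ rfl)⟩

variable [IsOrderedModule ℝ V]

theorem pos_of_mem_interior_Ici_zero [Nontrivial V] (he : e ∈ interior (Ici 0)) : 0 < e := by
  refine lt_of_le_of_ne (interior_subset he) ?_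
  rintro rfl
  obtain ⟨v, hv⟩ := exists_ne (0 : V)
  have h_nonneg (w : V) : 0 ≤ w := by
    have h_ev : ∀ᶠ t : ℝ in 𝓝[>] 0, t • w ∈ Ici (0 : V) := by
      refine ((Continuous.tendsto' (by fun_prop) 0 0 (zero_smul ℝ w)).mono_left
        nhdsWithin_le_nhds).eventually (mem_interior_iff_mem_nhds.1 he)
    obtain ⟨t, htw, ht⟩ := (h_ev.and self_mem_nhdsWithin).exists
    simpa [smul_smul, inv_mul_cancel₀ (ne_of_gt ht)] using
      smul_nonneg (inv_nonneg.2 (le_of_lt ht)) htw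
  exact hv (le_antisymm (neg_nonneg.1 (h_nonneg _)) (h_nonneg _))

theorem lt_of_mem_interior_Ici [Nontrivial V] {x y : V} (h : y ∈ interior (Ici x)) : x < y :=
  sub_pos.1 (pos_of_mem_interior_Ici_zero (mem_interior_Ici_iff_sub.1 h))

theorem exists_forall_le_norm_smul (he : e ∈ interior (Ici 0)) :
    ∃ C > 0, ∀ v : V, v ≤ (C * ‖v‖) • e := by
  obtain ⟨δ, hδ, hball⟩ := Metric.nhds_basis_closedBall.mem_iff.1 (mem_interior_iff_mem_nhds.1 he)
  refine ⟨δ⁻¹, inv_pos.2 hδ, fun v ↦ ?_⟩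
  rcases eq_or_ne v 0 with rfl | hv
  · simp
  have hv' : 0 < ‖v‖ := norm_pos_iff.2 hv
  have h_mem : e - (δ / ‖v‖) • v ∈ Ici (0 : V) :=
    hball <| by simp [norm_smul, abs_of_pos hδ, hv'.ne']
  have := smul_nonneg (show 0 ≤ δ⁻¹ * ‖v‖ by positivity) h_mem
  rwa [smul_sub, smul_smul, show δ⁻¹ * ‖v‖ * (δ / ‖v‖) = 1 by field_simp, one_smul,
    sub_nonneg] at this

theorem exists_forall_add_mem_interior_Ici_zero (he : e ∈ interior (Ici 0)) :
    ∃ C > 0, ∀ (r v : V) (s : ℝ), C * ‖r‖ < s → s • e ≤ v → r + v ∈ interior (Ici 0) := by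
  obtain ⟨C, hC, hCe⟩ := exists_forall_le_norm_smul he
  refine ⟨C, hC, fun r v s hs hv ↦ mem_interior_Ici_of_le
    (smul_mem_interior_Ici_zero (sub_pos.2 hs) he) ?_⟩
  calc (s - C * ‖r‖) • e = -((C * ‖-r‖) • e) + s • e := by rw [norm_neg]; module
    _ ≤ r + v := add_le_add (neg_le.1 (hCe (-r))) hv

theorem le_of_smul_le_smul [Nontrivial V] (he : e ∈ interior (Ici 0)) {s t : ℝ}
    (h : s • e ≤ t • e) : s ≤ t := by
  by_contra! hlt
  have : (s - t) • e ≤ 0 := by rwa [sub_smul, sub_nonpos]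
  exact (pos_of_mem_interior_Ici_zero
    (smul_mem_interior_Ici_zero (sub_pos.2 hlt) he)).not_ge this

end OrderUnit

section CompactFamily

theorem exists_norm_sub_smul_le_mul_norm {V W : Type*} [NormedAddCommGroup V] [NormedSpace ℝ V]
    [NormedAddCommGroup W] [NormedSpace ℝ W] {T : V →L[ℝ] W} {u : W} {B : ℝ}
    (h : ∀ v, ‖v‖ ≤ 1 → ∃ α : ℝ, ‖T v - α • u‖ ≤ B) (v : V) :
    ∃ α : ℝ, ‖T v - α • u‖ ≤ B * ‖v‖ := by
  rcases eq_or_ne v 0 with rfl | hv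
  · exact ⟨0, by simp⟩
  have hv' : ‖v‖ ≠ 0 := norm_ne_zero_iff.2 hv
  obtain ⟨α, hα⟩ := h (‖v‖⁻¹ • v) (by simp [norm_smul, hv'])
  refine ⟨‖v‖ * α, ?_⟩
  calc ‖T v - (‖v‖ * α) • u‖ = ‖‖v‖ • (T (‖v‖⁻¹ • v) - α • u)‖ := by
        rw [map_smul, smul_sub, smul_inv_smul₀ hv', smul_smul]
    _ ≤ B * ‖v‖ := by rw [norm_smul, norm_norm, mul_comm]; gcongr

theorem exists_subseq_tendsto_apply {𝕜 V W : Type*} [NontriviallyNormedField 𝕜]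
    [NormedAddCommGroup V] [NormedSpace 𝕜 V] [NormedAddCommGroup W] [NormedSpace 𝕜 W]
    {𝒜 : Set (V →L[𝕜] W)} (h𝒜 : IsCompact 𝒜) (hcpt : ∀ A ∈ 𝒜, IsCompactOperator A)
    {A : ℕ → V →L[𝕜] W} (hA : ∀ n, A n ∈ 𝒜) {r : ℝ} {v : ℕ → V} (hv : ∀ n, ‖v n‖ ≤ r) :
    ∃ y, ∃ φ : ℕ → ℕ, StrictMono φ ∧ Tendsto (fun n ↦ A (φ n) (v (φ n))) atTop (𝓝 y) := by
  obtain ⟨A₀, hA₀, φ, hφ, hAφ⟩ := h𝒜.tendsto_subseq hA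
  obtain ⟨y, -, ψ, hψ, hy⟩ := ((hcpt A₀ hA₀).isCompact_closure_image_closedBall r).tendsto_subseq
    fun n ↦ subset_closure (mem_image_of_mem A₀ (mem_closedBall_zero_iff.2 (hv (φ n))))
  have h_diff : Tendsto (fun n ↦ (A (φ (ψ n)) - A₀) (v (φ (ψ n)))) atTop (𝓝 0) := by
    refine squeeze_zero_norm (fun n ↦ (ContinuousLinearMap.le_opNorm _ _).trans
      (mul_le_mul_of_nonneg_left (hv _) (norm_nonneg _))) ?_
    simpa using ((tendsto_iff_norm_sub_tendsto_zero.1 hAφ).comp hψ.tendsto_atTop).mul_const r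
  exact ⟨y, φ ∘ ψ, hφ.comp hψ, by simpa using hy.add h_diff⟩

variable {V : Type*} [NormedAddCommGroup V] [NormedSpace ℝ V] [PartialOrder V]

/-- A norm-compact set of compact operators mapping nonzero nonnegative vectors into the interior
of the cone. The derivatives of a smooth strongly monotone map along a compact invariant set form
such a family, and the derivatives of its `n`-th iterate are products of `n` of its members. -/
structure IsCompactStronglyPositive (𝒜 : Set (V →L[ℝ] V)) : Prop where
  isCompact : IsCompact 𝒜
  isCompactOperator : ∀ A ∈ 𝒜, IsCompactOperator A
  map_pos : ∀ A ∈ 𝒜, ∀ v, 0 < v → A v ∈ interior (Ici 0)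

variable {𝒜 : Set (V →L[ℝ] V)} {e : V}

namespace IsCompactStronglyPositive

theorem map_nonneg (h𝒜 : IsCompactStronglyPositive 𝒜) {A : V →L[ℝ] V} (hA : A ∈ 𝒜) {v : V}
    (hv : 0 ≤ v) : 0 ≤ A v := by
  rcases hv.eq_or_lt with rfl | hv
  · simp
  · exact interior_subset (h𝒜.map_pos A hA v hv)

theorem pow_map_nonneg (h𝒜 : IsCompactStronglyPositive 𝒜) {n : ℕ} {T : V →L[ℝ] V}
    (hT : T ∈ 𝒜 ^ n) {v : V} (hv : 0 ≤ v) : 0 ≤ T v := by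
  induction n generalizing T with
  | zero => rw [pow_zero, Set.mem_one] at hT; simpa [hT]
  | succ n ih =>
    obtain ⟨A, hA, S, hS, rfl⟩ := mem_mul.1 (pow_succ' 𝒜 n ▸ hT)
    exact h𝒜.map_nonneg hA (ih hS)

theorem exists_norm_apply_le_of_abs_le [IsOrderedModule ℝ V] [OrderClosedTopology V]
    (h𝒜 : IsCompactStronglyPositive 𝒜) (e : V) (r : ℝ) {c : ℝ} (hc : 0 < c) :
    ∃ β > 0, ∀ A ∈ 𝒜, ∀ s ≥ 0, ∀ v, ‖v‖ ≤ r * s →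
      -((β * s) • e) ≤ A v → A v ≤ (β * s) • e → ‖A v‖ ≤ c * s := by
  suffices ∃ β : ℝ, 0 < β ∧ ∀ A ∈ 𝒜, ∀ v, ‖v‖ ≤ r → -(β • e) ≤ A v → A v ≤ β • e → ‖A v‖ ≤ c by
    obtain ⟨β, hβ, h⟩ := this
    refine ⟨β, hβ, fun A hA s hs v hv h_lo h_up ↦ ?_⟩
    rcases hs.eq_or_lt with rfl | hs
    · simp [norm_le_zero_iff.1 (hv.trans_eq (mul_zero r))]
    have h_cancel : s⁻¹ • (β * s) • e = β • e := by rw [smul_smul]; congr 1; field_simp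
    have := h A hA (s⁻¹ • v)
      (by rw [norm_smul, norm_inv, Real.norm_of_nonneg hs.le]; field_simp; linarith)
      (by simpa only [map_smul, smul_neg, h_cancel] using
        smul_le_smul_of_nonneg_left h_lo (inv_nonneg.2 hs.le))
      (by simpa only [map_smul, h_cancel] using
        smul_le_smul_of_nonneg_left h_up (inv_nonneg.2 hs.le))
    rwa [map_smul, norm_smul, norm_inv, Real.norm_of_nonneg hs.le, inv_mul_le_iff₀ hs,
      mul_comm] at this
  by_contra! hcon
  choose A hA v hv h_lo h_up hlt using fun n : ℕ ↦ hcon (1 / (n + 1)) (by positivity)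
  obtain ⟨y, φ, hφ, hy⟩ := exists_subseq_tendsto_apply h𝒜.isCompact h𝒜.isCompactOperator hA hv
  have h_zero : Tendsto (fun n ↦ (1 / ((φ n : ℕ) + 1) : ℝ) • e) atTop (𝓝 0) := by
    simpa using
      (tendsto_one_div_add_atTop_nhds_zero_nat (𝕜 := ℝ).comp hφ.tendsto_atTop).smul_const e
  have hy0 : y = 0 := le_antisymm (le_of_tendsto_of_tendsto' hy h_zero fun n ↦ h_up _)
    (le_of_tendsto_of_tendsto' (by simpa using h_zero.neg) hy fun n ↦ h_lo _)
  exact hc.not_ge (ge_of_tendsto' (by simpa [hy0] using hy.norm) fun n ↦ (hlt (φ n)).le)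

variable [IsOrderedAddMonoid V]

theorem pow_monotone (h𝒜 : IsCompactStronglyPositive 𝒜) {n : ℕ} {T : V →L[ℝ] V}
    (hT : T ∈ 𝒜 ^ n) : Monotone T := fun v w hvw ↦ by
  simpa [sub_nonneg] using h𝒜.pow_map_nonneg hT (sub_nonneg.2 hvw)

theorem monotone (h𝒜 : IsCompactStronglyPositive 𝒜) {A : V →L[ℝ] V} (hA : A ∈ 𝒜) :
    Monotone A :=
  h𝒜.pow_monotone (n := 1) (by simpa)

theorem exists_smul_le_apply (h𝒜 : IsCompactStronglyPositive 𝒜) (he : 0 < e) :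
    ∃ c > (0 : ℝ), ∀ A ∈ 𝒜, c • e ≤ A e := by
  obtain ⟨c, hc, h⟩ := exists_forall_smul_le_of_isCompact e
    (h𝒜.isCompact.image (continuous_id.clm_apply continuous_const))
    (image_subset_iff.2 fun A hA ↦ h𝒜.map_pos A hA e he)
  exact ⟨c, hc, fun A hA ↦ h _ (mem_image_of_mem _ hA)⟩

variable [IsOrderedModule ℝ V]

theorem exists_le_norm_pow [Nontrivial V] (h𝒜 : IsCompactStronglyPositive 𝒜)
    (he : e ∈ interior (Ici 0)) (n : ℕ) : ∃ b > 0, ∀ T ∈ 𝒜 ^ n, b ≤ ‖T‖ := by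
  have he_pos := pos_of_mem_interior_Ici_zero he
  obtain ⟨c, hc, hce⟩ := h𝒜.exists_smul_le_apply he_pos
  obtain ⟨C, hC, hCe⟩ := exists_forall_le_norm_smul he
  have h_pow : ∀ T ∈ 𝒜 ^ n, c ^ n • e ≤ T e := by
    induction n with
    | zero => intro T hT; rw [pow_zero, Set.mem_one] at hT; simp [hT]
    | succ n ih =>
      intro T hT
      obtain ⟨S, hS, A, hA, rfl⟩ := mem_mul.1 (pow_succ 𝒜 n ▸ hT)
      calc c ^ (n + 1) • e = c • c ^ n • e := by rw [smul_smul, pow_succ']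
        _ ≤ c • S e := by gcongr; exact ih S hS
        _ ≤ S (A e) := by simpa using h𝒜.pow_monotone hS (hce A hA)
  refine ⟨c ^ n / (C * ‖e‖), div_pos (by positivity)
    (mul_pos hC (norm_pos_iff.2 he_pos.ne')), fun T hT ↦ div_le_of_le_mul₀ (by positivity)
    (norm_nonneg _) ?_⟩
  calc c ^ n ≤ C * ‖T e‖ := le_of_smul_le_smul he ((h_pow T hT).trans (hCe _))
    _ ≤ C * (‖T‖ * ‖e‖) := by gcongr; exact T.le_opNorm e
    _ = ‖T‖ * (C * ‖e‖) := by ring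

theorem exists_pow_apply_le_smul (h𝒜 : IsCompactStronglyPositive 𝒜)
    (he : e ∈ interior (Ici 0)) :
    ∃ C > 0, ∀ n, ∀ T ∈ 𝒜 ^ n, ∀ v, T v ≤ (C * ‖T e‖ * ‖v‖) • e := by
  obtain ⟨C, hC, hCe⟩ := exists_forall_le_norm_smul he
  refine ⟨C ^ 2, by positivity, fun n T hT v ↦ ?_⟩
  calc T v ≤ T ((C * ‖v‖) • e) := h𝒜.pow_monotone hT (hCe v)
    _ = (C * ‖v‖) • T e := by simp
    _ ≤ (C * ‖v‖) • (C * ‖T e‖) • e := by gcongr; exact hCe _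
    _ = (C ^ 2 * ‖T e‖ * ‖v‖) • e := by rw [smul_smul]; congr 1; ring

variable [OrderClosedTopology V]

theorem exists_smul_norm_le_apply_apply (h𝒜 : IsCompactStronglyPositive 𝒜) (e : V) (r : ℝ) :
    ∃ β > 0, ∀ A ∈ 𝒜, ∀ A' ∈ 𝒜, ∀ v, 0 ≤ A v → ‖v‖ ≤ r * ‖A v‖ →
      (β * ‖A v‖) • e ≤ A' (A v) := by
  suffices ∃ β : ℝ, 0 < β ∧ ∀ A ∈ 𝒜, ∀ A' ∈ 𝒜, ∀ v, 0 ≤ A v → ‖A v‖ = 1 → ‖v‖ ≤ r →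
      β • e ≤ A' (A v) by
    obtain ⟨β, hβ, h⟩ := this
    refine ⟨β, hβ, fun A hA A' hA' v hAv hv ↦ ?_⟩
    rcases eq_or_ne (A v) 0 with h0 | h0
    · simp [h0]
    have hpos : 0 < ‖A v‖ := norm_pos_iff.2 h0
    have := h A hA A' hA' (‖A v‖⁻¹ • v) (by simpa using smul_nonneg (by positivity) hAv)
      (by simp [norm_smul, hpos.ne'])
      (by rw [norm_smul, norm_inv, norm_norm]; field_simp; linarith)
    simpa [smul_smul, mul_comm, hpos.ne'] using smul_le_smul_of_nonneg_left this hpos.le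
  by_contra! hcon
  choose A hA A' hA' v hAv hnorm hv hlt using fun n : ℕ ↦ hcon (1 / (n + 1)) (by positivity)
  obtain ⟨y, φ, hφ, hy⟩ := exists_subseq_tendsto_apply h𝒜.isCompact h𝒜.isCompactOperator hA hv
  obtain ⟨A₀, hA₀, ψ, hψ, hAψ⟩ := h𝒜.isCompact.tendsto_subseq fun n ↦ hA' (φ n)
  have hy_pos : 0 < y := by
    refine lt_of_le_of_ne (ge_of_tendsto' hy fun n ↦ hAv _) ?_
    rintro rfl
    exact one_ne_zero (tendsto_nhds_unique (by simp [hnorm]) (norm_zero (E := V) ▸ hy.norm))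
  have h_lim : Tendsto (fun n ↦ A' (φ (ψ n)) (A (φ (ψ n)) (v (φ (ψ n))))
      - (1 / ((φ (ψ n) : ℕ) + 1) : ℝ) • e) atTop (𝓝 (A₀ y - (0 : ℝ) • e)) :=
    (((continuous_fst.clm_apply continuous_snd).tendsto (A₀, y)).comp
      (hAψ.prodMk_nhds (hy.comp hψ.tendsto_atTop))).sub
      ((tendsto_one_div_add_atTop_nhds_zero_nat.comp (hφ.comp hψ).tendsto_atTop).smul_const e)
  rw [zero_smul, sub_zero] at h_lim
  obtain ⟨n, hn⟩ := (h_lim.eventually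
    (isOpen_interior.mem_nhds (h𝒜.map_pos A₀ hA₀ y hy_pos))).exists
  exact hlt _ (sub_nonneg.1 (interior_subset hn))

theorem exists_smul_norm_le_apply_pow (h𝒜 : IsCompactStronglyPositive 𝒜) (he : 0 < e) :
    ∃ β > 0, ∀ n, ∀ T ∈ 𝒜 ^ n, ∀ A ∈ 𝒜, (β * ‖T e‖) • e ≤ A (T e) := by
  obtain ⟨c, hc, hce⟩ := h𝒜.exists_smul_le_apply he
  obtain ⟨β, hβ, hβe⟩ := h𝒜.exists_smul_norm_le_apply_apply e c⁻¹
  have he_norm : 0 < ‖e‖ := norm_pos_iff.2 he.ne'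
  refine ⟨min β (c / ‖e‖), by positivity, fun n ↦ ?_⟩
  induction n with
  | zero =>
    intro T hT A hA
    rw [pow_zero, Set.mem_one] at hT
    calc (min β (c / ‖e‖) * ‖T e‖) • e ≤ (c / ‖e‖ * ‖e‖) • e := by
          rw [hT, one_apply_eq_self]
          gcongr
          exact min_le_right _ _
      _ = c • e := by rw [div_mul_cancel₀ _ he_norm.ne']
      _ ≤ A (T e) := by simpa [hT] using hce A hA
  | succ n ih =>
    intro T hT A hA
    obtain ⟨A₁, hA₁, S, hS, rfl⟩ := mem_mul.1 (pow_succ' 𝒜 n ▸ hT)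
    rw [mul_apply_eq_comp]
    have hSe := ih S hS A₁ hA₁
    rcases le_or_gt (c * ‖S e‖) ‖A₁ (S e)‖ with hle | hlt
    · refine le_trans ?_ (hβe A₁ hA₁ A hA (S e)
        (h𝒜.map_nonneg hA₁ (h𝒜.pow_map_nonneg hS he.le)) (by field_simp; linarith))
      gcongr
      exact min_le_left _ _
    · calc (min β (c / ‖e‖) * ‖A₁ (S e)‖) • e
          ≤ (min β (c / ‖e‖) * (c * ‖S e‖)) • e := by gcongr
        _ = (min β (c / ‖e‖) * ‖S e‖) • c • e := by rw [smul_smul]; congr 1; ring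
        _ ≤ (min β (c / ‖e‖) * ‖S e‖) • A e := by gcongr; exact hce A hA
        _ ≤ A (A₁ (S e)) := by simpa using h𝒜.monotone hA hSe

variable [Nontrivial V]

theorem exists_norm_le_mul_norm_apply (h𝒜 : IsCompactStronglyPositive 𝒜)
    (he : e ∈ interior (Ici 0)) : ∃ R > 0, ∀ n, ∀ T ∈ 𝒜 ^ n, ‖T‖ ≤ R * ‖T e‖ := by
  have he_pos := pos_of_mem_interior_Ici_zero he
  have he_norm : 0 < ‖e‖ := norm_pos_iff.2 he_pos.ne'
  obtain ⟨C, hC, hCe⟩ := exists_forall_le_norm_smul he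
  obtain ⟨D, hD, hDe⟩ := h𝒜.exists_pow_apply_le_smul he
  obtain ⟨β, hβ, hβe⟩ := h𝒜.exists_smul_norm_le_apply_pow he_pos
  obtain ⟨δ, hδ, hδe⟩ := h𝒜.exists_norm_apply_le_of_abs_le e (C / β) one_pos
  set R := max ‖e‖⁻¹ (D / δ)
  have hR_pos : 0 < R := by positivity
  refine ⟨R, hR_pos, fun n ↦ ?_⟩
  induction n with
  | zero =>
    intro T hT
    rw [pow_zero, Set.mem_one] at hT
    calc ‖T‖ ≤ 1 := hT ▸ ContinuousLinearMap.norm_id_le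
      _ = ‖e‖⁻¹ * ‖e‖ := (inv_mul_cancel₀ he_norm.ne').symm
      _ ≤ R * ‖T e‖ := by rw [hT, one_apply_eq_self]; gcongr; exact le_max_left _ _
  | succ n ih =>
    intro T hT
    obtain ⟨A, hA, S, hS, rfl⟩ := mem_mul.1 (pow_succ' 𝒜 n ▸ hT)
    refine ContinuousLinearMap.opNorm_le_bound _ (by positivity) fun v ↦ ?_
    set s := R * ‖(A * S) e‖ * ‖v‖ with hs
    have h_growth : β * ‖S e‖ ≤ C * ‖(A * S) e‖ :=
      le_of_smul_le_smul he ((hβe n S hS A hA).trans (hCe _))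
    have h_prev : ‖S v‖ ≤ C / β * s := by
      calc ‖S v‖ ≤ R * ‖S e‖ * ‖v‖ := S.le_of_opNorm_le (ih S hS) v
        _ ≤ R * (C / β * ‖(A * S) e‖) * ‖v‖ := by
          gcongr; rw [div_mul_eq_mul_div, le_div_iff₀ hβ]; linarith
        _ = C / β * s := by rw [hs]; ring
    have h_order (w : V) (hw : ‖w‖ = ‖v‖) : A (S w) ≤ (δ * s) • e := by
      calc A (S w) ≤ (D * ‖(A * S) e‖ * ‖v‖) • e := hw ▸ hDe _ (A * S) hT w
        _ = (δ * (D / δ * ‖(A * S) e‖ * ‖v‖)) • e := by congr 1; field_simp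
        _ ≤ (δ * s) • e := by rw [hs]; gcongr; exact le_max_right _ _
    simpa using hδe A hA s (by positivity) (S v) h_prev
      (neg_le.1 (by simpa using h_order (-v) (norm_neg v))) (h_order v rfl)

theorem exists_smul_norm_le_pow_apply (h𝒜 : IsCompactStronglyPositive 𝒜)
    (he : e ∈ interior (Ici 0)) : ∃ c > 0, ∀ n, ∀ T ∈ 𝒜 ^ n, (c * ‖T‖) • e ≤ T e := by
  have he_pos := pos_of_mem_interior_Ici_zero he
  obtain ⟨β, hβ, hβe⟩ := h𝒜.exists_smul_norm_le_apply_pow he_pos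
  obtain ⟨R, hR, hRe⟩ := h𝒜.exists_norm_le_mul_norm_apply he
  obtain ⟨M, hM, hM𝒜⟩ := h𝒜.isCompact.isBounded.exists_pos_norm_le
  refine ⟨min 1 (β / (M * R)), by positivity, fun n T hT ↦ ?_⟩
  cases n with
  | zero =>
    rw [pow_zero, Set.mem_one] at hT
    have : min 1 (β / (M * R)) * ‖T‖ ≤ 1 :=
      mul_le_one₀ (min_le_left _ _) (norm_nonneg _) (hT ▸ ContinuousLinearMap.norm_id_le)
    calc (min 1 (β / (M * R)) * ‖T‖) • e ≤ (1 : ℝ) • e := by gcongr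
      _ = T e := by rw [hT, one_smul, one_apply_eq_self]
  | succ n =>
    obtain ⟨A, hA, S, hS, rfl⟩ := mem_mul.1 (pow_succ' 𝒜 n ▸ hT)
    have h_norm : ‖A * S‖ ≤ M * (R * ‖S e‖) :=
      (norm_mul_le A S).trans (mul_le_mul (hM𝒜 A hA) (hRe n S hS) (norm_nonneg _) hM.le)
    calc (min 1 (β / (M * R)) * ‖A * S‖) • e
        ≤ (β / (M * R) * (M * (R * ‖S e‖))) • e := by gcongr; exact min_le_right _ _
      _ = (β * ‖S e‖) • e := by congr 1; field_simp
      _ ≤ (A * S) e := hβe n S hS A hA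

theorem exists_mul_norm_mul_norm_le_norm_mul (h𝒜 : IsCompactStronglyPositive 𝒜)
    (he : e ∈ interior (Ici 0)) :
    ∃ c > 0, ∀ m, ∀ S ∈ 𝒜 ^ m, ∀ n, ∀ T ∈ 𝒜 ^ n, c * (‖S‖ * ‖T‖) ≤ ‖S * T‖ := by
  obtain ⟨c, hc, hce⟩ := h𝒜.exists_smul_norm_le_pow_apply he
  obtain ⟨C, hC, hCe⟩ := exists_forall_le_norm_smul he
  have he_norm : 0 < ‖e‖ := norm_pos_iff.2 (pos_of_mem_interior_Ici_zero he).ne'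
  refine ⟨c ^ 2 / (C * ‖e‖), by positivity, fun m S hS n T hT ↦ ?_⟩
  have : c ^ 2 * (‖S‖ * ‖T‖) ≤ C * ‖(S * T) e‖ := by
    refine le_of_smul_le_smul he ?_
    calc (c ^ 2 * (‖S‖ * ‖T‖)) • e = (c * ‖T‖) • (c * ‖S‖) • e := by
          rw [smul_smul]; congr 1; ring
      _ ≤ (c * ‖T‖) • S e := by gcongr; exact hce m S hS
      _ ≤ S (T e) := by simpa using h𝒜.pow_monotone hS (hce n T hT)
      _ ≤ (C * ‖(S * T) e‖) • e := hCe _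
  rw [div_mul_eq_mul_div, div_le_iff₀ (by positivity)]
  calc c ^ 2 * (‖S‖ * ‖T‖) ≤ C * ‖(S * T) e‖ := this
    _ ≤ C * (‖S * T‖ * ‖e‖) := by gcongr; exact (S * T).le_opNorm e
    _ = ‖S * T‖ * (C * ‖e‖) := by ring

theorem exists_norm_le_mul_norm_apply_apply (h𝒜 : IsCompactStronglyPositive 𝒜)
    (he : e ∈ interior (Ici 0)) :
    ∃ R > 0, ∀ n, ∀ S ∈ 𝒜 ^ n, ∀ A ∈ 𝒜, ‖S‖ ≤ R * ‖A (S e)‖ := by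
  obtain ⟨β, hβ, hβe⟩ := h𝒜.exists_smul_norm_le_apply_pow (pos_of_mem_interior_Ici_zero he)
  obtain ⟨R, hR, hRe⟩ := h𝒜.exists_norm_le_mul_norm_apply he
  obtain ⟨C, hC, hCe⟩ := exists_forall_le_norm_smul he
  refine ⟨R * (C / β), by positivity, fun n S hS A hA ↦ (hRe n S hS).trans ?_⟩
  have : β * ‖S e‖ ≤ C * ‖A (S e)‖ := le_of_smul_le_smul he ((hβe n S hS A hA).trans (hCe _))
  rw [mul_assoc, div_mul_eq_mul_div]
  gcongr
  rwa [le_div_iff₀' hβ]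

theorem exists_smul_apply_le_of_norm_le (h𝒜 : IsCompactStronglyPositive 𝒜)
    (he : e ∈ interior (Ici 0)) {C θ : ℝ} (hC : 0 < C) (hθ : 0 < θ) :
    ∃ γ ∈ Ioo (0 : ℝ) 1, ∀ n, ∀ S ∈ 𝒜 ^ n, ∀ A ∈ 𝒜, ∀ A' ∈ 𝒜, ∀ w, ∀ d ≥ θ, ‖w‖ ≤ C → 0 ≤ S w →
      d * ‖A (S e)‖ ≤ 2 * ‖A (S w)‖ → (γ * d) • A' (A (S e)) ≤ A' (A (S w)) := by
  obtain ⟨R, hR, hRe⟩ := h𝒜.exists_norm_le_mul_norm_apply_apply he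
  obtain ⟨β, hβ, hβe⟩ := h𝒜.exists_smul_norm_le_apply_apply e (R * (2 / θ) * C)
  obtain ⟨D, hD, hDe⟩ := exists_forall_le_norm_smul he
  obtain ⟨B, hB, hB𝒜⟩ := h𝒜.isCompact.isBounded.exists_pos_norm_le
  refine ⟨min (β / (2 * D * B)) 2⁻¹, ⟨by positivity, (min_le_right _ _).trans_lt (by norm_num)⟩,
    fun n S hS A hA A' hA' w d hd hw hSw hdw ↦ ?_⟩
  have hd_pos : 0 < d := hθ.trans_le hd
  have h_prev : ‖S w‖ ≤ R * (2 / θ) * C * ‖A (S w)‖ := by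
    have h_Se : ‖A (S e)‖ ≤ 2 / θ * ‖A (S w)‖ := by
      rw [div_mul_eq_mul_div, le_div_iff₀' hθ]
      exact (mul_le_mul_of_nonneg_right hd (norm_nonneg _)).trans hdw
    calc ‖S w‖ ≤ ‖S‖ * C := S.le_opNorm_of_le hw
      _ ≤ R * (2 / θ * ‖A (S w)‖) * C := by
        gcongr; exact (hRe n S hS A hA).trans (by gcongr)
      _ = R * (2 / θ) * C * ‖A (S w)‖ := by ring
  calc (min (β / (2 * D * B)) 2⁻¹ * d) • A' (A (S e))
      ≤ (min (β / (2 * D * B)) 2⁻¹ * d) • (D * ‖A' (A (S e))‖) • e := by gcongr; exact hDe _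
    _ ≤ (β / (2 * D * B) * d * (D * (B * ‖A (S e)‖))) • e := by
      rw [smul_smul]
      gcongr
      exacts [interior_subset he, min_le_left _ _, A'.le_of_opNorm_le (hB𝒜 A' hA') _]
    _ = (β * (d * ‖A (S e)‖ / 2)) • e := by congr 1; field_simp
    _ ≤ (β * ‖A (S w)‖) • e := by
      gcongr
      exacts [interior_subset he, by linarith]
    _ ≤ A' (A (S w)) := hβe A hA A' hA' _ (h𝒜.map_nonneg hA hSw) h_prev

theorem exists_oscillation_contraction (h𝒜 : IsCompactStronglyPositive 𝒜)
    (he : e ∈ interior (Ici 0)) {C θ : ℝ} (hC : 0 < C) (hθ : 0 < θ) :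
    ∃ γ ∈ Ioo (0 : ℝ) 1, ∀ n, ∀ S ∈ 𝒜 ^ n, ∀ A ∈ 𝒜, ∀ A' ∈ 𝒜, ∀ v m M, ‖v‖ ≤ 1 →
      |m| ≤ C → |M| ≤ C → θ ≤ M - m → S v ∈ Icc (m • S e) (M • S e) →
      ∃ m' M', m ≤ m' ∧ m' ≤ M' ∧ M' ≤ M ∧ M' - m' = (1 - γ) * (M - m) ∧
        A' (A (S v)) ∈ Icc (m' • A' (A (S e))) (M' • A' (A (S e))) := by
  obtain ⟨γ, ⟨hγ, hγ_lt⟩, h⟩ := h𝒜.exists_smul_apply_le_of_norm_le he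
    (show 0 < 1 + C * ‖e‖ by positivity) hθ
  refine ⟨γ, ⟨hγ, hγ_lt⟩, fun n S hS A hA A' hA' v m M hv hm hM hmM hSv ↦ ?_⟩
  have h_norm {a : ℝ} (ha : |a| ≤ C) : ‖v - a • e‖ ≤ 1 + C * ‖e‖ := by
    refine (norm_sub_le _ _).trans (add_le_add hv ?_)
    rw [norm_smul, Real.norm_eq_abs]
    gcongr
  have h_sum : (M - m) * ‖A (S e)‖ ≤ ‖A (S (v - m • e))‖ + ‖A (S (M • e - v))‖ := by
    refine le_of_eq_of_le ?_ (norm_add_le _ _)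
    rw [← map_add, ← map_add, sub_add_sub_comm, add_comm, add_sub_add_right_eq_sub, ← sub_smul,
      map_smul, map_smul, norm_smul, Real.norm_of_nonneg (hθ.le.trans hmM)]
  have h_mono : Monotone (A' ∘ A) := (h𝒜.monotone hA').comp (h𝒜.monotone hA)
  rcases le_total ‖A (S (M • e - v))‖ ‖A (S (v - m • e))‖ with hle | hle
  · have := h n S hS A hA A' hA' (v - m • e) (M - m) hmM (h_norm hm)
      (by simpa using hSv.1) (by linarith)
    refine ⟨m + γ * (M - m), M, by nlinarith, by nlinarith, le_rfl, by ring, ?_,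
      by simpa using h_mono hSv.2⟩
    simp only [map_sub, map_smul] at this
    rwa [add_smul, add_comm, ← le_sub_iff_add_le]
  · have := h n S hS A hA A' hA' (M • e - v) (M - m) hmM (norm_sub_rev v _ ▸ h_norm hM)
      (by simpa using hSv.2) (by linarith)
    refine ⟨m, M - γ * (M - m), le_rfl, by nlinarith, by nlinarith, by ring,
      by simpa using h_mono hSv.1, ?_⟩
    simp only [map_sub, map_smul] at this
    rwa [sub_smul, le_sub_comm]

theorem exists_pow_oscillation_le_max (h𝒜 : IsCompactStronglyPositive 𝒜)
    (he : e ∈ interior (Ici 0)) : ∃ C > (0 : ℝ), ∀ θ > (0 : ℝ), ∃ γ ∈ Ioo (0 : ℝ) 1, ∀ j,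
      ∀ T ∈ 𝒜 ^ (2 * j), ∀ v, ‖v‖ ≤ 1 → ∃ m M, -C ≤ m ∧ m ≤ M ∧ M ≤ C ∧
        M - m ≤ max θ ((1 - γ) ^ j * (2 * C)) ∧ T v ∈ Icc (m • T e) (M • T e) := by
  obtain ⟨C, hC, hCe⟩ := exists_forall_le_norm_smul he
  refine ⟨C, hC, fun θ hθ ↦ ?_⟩
  obtain ⟨γ, ⟨hγ, hγ_lt⟩, h⟩ := h𝒜.exists_oscillation_contraction he hC hθ
  refine ⟨γ, ⟨hγ, hγ_lt⟩, fun j ↦ ?_⟩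
  induction j with
  | zero =>
    intro T hT v hv
    have hle (w : V) (hw : ‖w‖ ≤ 1) : w ≤ C • e := (hCe w).trans (by
      gcongr
      exacts [interior_subset he, mul_le_of_le_one_right hC.le hw])
    rw [mul_zero, pow_zero, Set.mem_one] at hT
    refine ⟨-C, C, le_rfl, by linarith, le_rfl, le_max_of_le_right (by linarith), ?_⟩
    simpa [hT, hle v hv] using neg_le.1 (hle (-v) (by rwa [norm_neg]))
  | succ j ih =>
    intro T hT v hv
    rw [show 2 * (j + 1) = 2 * j + 1 + 1 by ring, pow_succ'] at hT
    obtain ⟨A', hA', _, hAS, rfl⟩ := mem_mul.1 hT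
    obtain ⟨A, hA, S, hS, rfl⟩ := mem_mul.1 (pow_succ' 𝒜 _ ▸ hAS)
    obtain ⟨m, M, hm, hmM, hM, h_osc, h_mem⟩ := ih S hS v hv
    rcases le_or_gt (M - m) θ with h_small | h_large
    · have h_mono : Monotone (A' ∘ A) := (h𝒜.monotone hA').comp (h𝒜.monotone hA)
      exact ⟨m, M, hm, hmM, hM, h_small.trans (le_max_left _ _),
        by simpa using h_mono h_mem.1, by simpa using h_mono h_mem.2⟩
    obtain ⟨m', M', hm', hmM', hM', h_eq, h_mem'⟩ := h _ S hS A hA A' hA' v m M hv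
      (abs_le.2 ⟨hm, hmM.trans hM⟩) (abs_le.2 ⟨hm.trans hmM, hM⟩) h_large.le h_mem
    refine ⟨m', M', hm.trans hm', hmM', hM'.trans hM, le_max_of_le_right ?_, h_mem'⟩
    rw [h_eq, pow_succ', mul_assoc]
    exact mul_le_mul_of_nonneg_left ((le_max_iff.1 h_osc).resolve_left h_large.not_ge)
      (by linarith)

theorem exists_pow_oscillation_le (h𝒜 : IsCompactStronglyPositive 𝒜)
    (he : e ∈ interior (Ici 0)) : ∃ C > (0 : ℝ), ∀ θ > (0 : ℝ), ∃ n, ∀ T ∈ 𝒜 ^ n, ∀ v, ‖v‖ ≤ 1 →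
      ∃ m M, |m| ≤ C ∧ M - m ≤ θ ∧ T v ∈ Icc (m • T e) (M • T e) := by
  obtain ⟨C, hC, h⟩ := h𝒜.exists_pow_oscillation_le_max he
  refine ⟨C, hC, fun θ hθ ↦ ?_⟩
  obtain ⟨γ, ⟨hγ, hγ_lt⟩, hγ_osc⟩ := h θ hθ
  have h_lim : Tendsto (fun j : ℕ ↦ (1 - γ) ^ j * (2 * C)) atTop (𝓝 0) := by
    simpa using (tendsto_pow_atTop_nhds_zero_of_lt_one (sub_nonneg.2 hγ_lt.le)
      (sub_lt_self 1 hγ)).mul_const (2 * C)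
  obtain ⟨j, hj⟩ := (h_lim.eventually_lt_const hθ).exists
  refine ⟨2 * j, fun T hT v hv ↦ ?_⟩
  obtain ⟨m, M, hm, hmM, hM, h_osc, h_mem⟩ := hγ_osc j T hT v hv
  exact ⟨m, M, abs_le.2 ⟨hm, hmM.trans hM⟩, by rwa [max_eq_left hj.le] at h_osc, h_mem⟩

theorem exists_pow_norm_sub_smul_le (h𝒜 : IsCompactStronglyPositive 𝒜)
    (he : e ∈ interior (Ici 0)) {θ : ℝ} (hθ : 0 < θ) :
    ∃ n > 0, ∀ T ∈ 𝒜 ^ n, ∀ v, ‖v‖ ≤ 1 → ∃ α : ℝ, ‖T v - α • T e‖ ≤ θ * ‖T‖ := by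
  have he_norm : 0 < ‖e‖ := norm_pos_iff.2 (pos_of_mem_interior_Ici_zero he).ne'
  obtain ⟨D, hD, hDe⟩ := exists_forall_le_norm_smul he
  obtain ⟨R, hR, hRe⟩ := h𝒜.exists_norm_le_mul_norm_apply_apply he
  obtain ⟨C, hC, h_osc⟩ := h𝒜.exists_pow_oscillation_le he
  obtain ⟨β, hβ, hβe⟩ := h𝒜.exists_norm_apply_le_of_abs_le e (R * ‖e‖ * (1 + C * ‖e‖))
    (show 0 < θ by positivity)
  obtain ⟨n, hn⟩ := h_osc (β / (D * ‖e‖)) (by positivity)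
  refine ⟨n + 1, n.succ_pos, fun T hT v hv ↦ ?_⟩
  obtain ⟨A, hA, S, hS, rfl⟩ := mem_mul.1 (pow_succ' 𝒜 n ▸ hT)
  obtain ⟨m, M, hm, hmM, h_lo, h_up⟩ := hn S hS v hv
  have h_e : ‖A (S e)‖ ≤ ‖A * S‖ * ‖e‖ := (A * S).le_opNorm e
  have h_norm : ‖S v - m • S e‖ ≤ R * ‖e‖ * (1 + C * ‖e‖) * ‖A * S‖ := by
    calc ‖S v - m • S e‖ = ‖S (v - m • e)‖ := by simp
      _ ≤ ‖S‖ * (1 + C * ‖e‖) := by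
        refine S.le_opNorm_of_le ((norm_sub_le _ _).trans (add_le_add hv ?_))
        rw [norm_smul, Real.norm_eq_abs]
        gcongr
      _ ≤ R * (‖A * S‖ * ‖e‖) * (1 + C * ‖e‖) := by
        gcongr; exact (hRe n S hS A hA).trans (by gcongr)
      _ = R * ‖e‖ * (1 + C * ‖e‖) * ‖A * S‖ := by ring
  have h_nonneg : 0 ≤ A (S v - m • S e) := h𝒜.map_nonneg hA (sub_nonneg.2 h_lo)
  have h_le : A (S v - m • S e) ≤ (β * ‖A * S‖) • e := by
    calc A (S v - m • S e) ≤ A ((M - m) • S e) := by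
          rw [sub_smul]; exact h𝒜.monotone hA (sub_le_sub_right h_up _)
      _ = (M - m) • A (S e) := by simp
      _ ≤ (β / (D * ‖e‖)) • A (S e) := by
        gcongr
        exact h𝒜.map_nonneg hA (h𝒜.pow_map_nonneg hS (interior_subset he))
      _ ≤ (β / (D * ‖e‖)) • (D * (‖A * S‖ * ‖e‖)) • e := by
        gcongr
        refine (hDe _).trans ?_
        gcongr
        exact interior_subset he
      _ = (β * ‖A * S‖) • e := by rw [smul_smul]; congr 1; field_simp
  refine ⟨m, ?_⟩
  simpa using hβe A hA ‖A * S‖ (norm_nonneg _) _ h_norm (le_trans (neg_nonpos.2 (smul_nonneg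
    (by positivity) (interior_subset he))) h_nonneg) h_le

theorem exists_pow_norm_le_of_notMem_interior (h𝒜 : IsCompactStronglyPositive 𝒜)
    (he : e ∈ interior (Ici 0)) {κ : ℝ} (hκ : 0 < κ) :
    ∃ n > 0, ∃ θ > 0, ∀ T ∈ 𝒜 ^ n, ∀ v y : V, ‖y - T v‖ ≤ θ * ‖T‖ * ‖v‖ →
      y ∉ interior (Ici 0) → -y ∉ interior (Ici 0) → ‖y‖ ≤ κ * ‖T‖ * ‖v‖ := by
  obtain ⟨c, hc, hce⟩ := h𝒜.exists_smul_norm_le_pow_apply he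
  obtain ⟨C, hC, hCe⟩ := exists_forall_add_mem_interior_Ici_zero he
  set θ := κ / (2 + 2 * C * ‖e‖ / c) with hθ_def
  have hθ : 0 < θ := by positivity
  obtain ⟨n, hn, h_osc⟩ := h𝒜.exists_pow_norm_sub_smul_le he hθ
  refine ⟨n, hn, θ, hθ, fun T hT v y hy hy_pos hy_neg ↦ ?_⟩
  obtain ⟨α, hα⟩ := exists_norm_sub_smul_le_mul_norm (h_osc T hT) v
  have h_rem : ‖y - α • T e‖ ≤ 2 * θ * ‖T‖ * ‖v‖ := by
    linarith [norm_sub_le_norm_sub_add_norm_sub y (T v) (α • T e)]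
  have h_Te (a : ℝ) (ha : 0 ≤ a) : (a * (c * ‖T‖)) • e ≤ a • T e := by
    rw [mul_smul]
    exact smul_le_smul_of_nonneg_left (hce n T hT) ha
  have h_coeff : |α| * (c * ‖T‖) ≤ C * ‖y - α • T e‖ := by
    by_contra! hlt
    rcases le_total 0 α with hα₀ | hα₀
    · rw [abs_of_nonneg hα₀] at hlt
      exact hy_pos (by simpa using hCe _ _ _ hlt (h_Te α hα₀))
    · rw [abs_of_nonpos hα₀, ← norm_neg] at hlt
      have := hCe _ _ _ hlt (h_Te (-α) (neg_nonneg.2 hα₀))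
      rw [neg_smul, neg_sub, sub_add_eq_add_sub, add_neg_cancel, zero_sub] at this
      exact hy_neg this
  have h_main : ‖α • T e‖ ≤ 2 * C * ‖e‖ / c * (θ * ‖T‖ * ‖v‖) := by
    calc ‖α • T e‖ ≤ |α| * (‖T‖ * ‖e‖) := by
          rw [norm_smul, Real.norm_eq_abs]; gcongr; exact T.le_opNorm e
      _ = |α| * (c * ‖T‖) * (‖e‖ / c) := by field_simp
      _ ≤ C * (2 * θ * ‖T‖ * ‖v‖) * (‖e‖ / c) := by gcongr ?_ * _; exact h_coeff.trans (by gcongr)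
      _ = 2 * C * ‖e‖ / c * (θ * ‖T‖ * ‖v‖) := by ring
  calc ‖y‖ ≤ ‖y - α • T e‖ + ‖α • T e‖ := by simpa using norm_add_le (y - α • T e) (α • T e)
    _ ≤ 2 * θ * ‖T‖ * ‖v‖ + 2 * C * ‖e‖ / c * (θ * ‖T‖ * ‖v‖) := add_le_add h_rem h_main
    _ = (2 + 2 * C * ‖e‖ / c) * θ * ‖T‖ * ‖v‖ := by ring
    _ = κ * ‖T‖ * ‖v‖ := by rw [hθ_def, mul_div_cancel₀ _ (by positivity)]

theorem exists_norm_le_of_notMem_interior_Ici_smul (h𝒜 : IsCompactStronglyPositive 𝒜)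
    (he : e ∈ interior (Ici 0)) (t : ℝ) :
    ∃ M, ∀ n, ∀ T ∈ 𝒜 ^ n, T e ∉ interior (Ici (t • e)) → ‖T‖ ≤ M := by
  obtain ⟨c, hc, hce⟩ := h𝒜.exists_smul_norm_le_pow_apply he
  refine ⟨t / c, fun n T hT h_not ↦ (le_div_iff₀' hc).2 (not_lt.1 fun hlt ↦ h_not ?_)⟩
  rw [mem_interior_Ici_iff_sub]
  refine mem_interior_Ici_of_le (smul_mem_interior_Ici_zero (sub_pos.2 hlt) he) ?_
  rw [sub_smul]
  exact sub_le_sub_right (hce n T hT) _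

end IsCompactStronglyPositive

end CompactFamily

section Calculus

theorem exists_norm_sub_sub_fderiv_apply_le_of_isCompact {V W : Type*} [NormedAddCommGroup V]
    [NormedSpace ℝ V] [NormedAddCommGroup W] [NormedSpace ℝ W] {g : V → W} (hg : ContDiff ℝ 1 g)
    {Ω : Set V} (hΩ : IsCompact Ω) {η : ℝ} (hη : 0 < η) :
    ∃ δ > 0, ∀ z ∈ Ω, ∀ w, ‖w - z‖ ≤ δ →
      ‖g w - g z - fderiv ℝ g z (w - z)‖ ≤ η * ‖w - z‖ := by
  obtain ⟨δ, hδ, h⟩ := Metric.mem_uniformity_dist.1 <| hΩ.uniformContinuousAt_of_continuousAt _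
    (fun z _ ↦ (hg.continuous_fderiv one_ne_zero).continuousAt) (Metric.dist_mem_uniformity hη)
  refine ⟨δ / 2, half_pos hδ, fun z hz w hw ↦ ?_⟩
  refine (convex_closedBall z (δ / 2)).norm_image_sub_le_of_norm_hasFDerivWithin_le'
    (fun x _ ↦ ((hg.differentiable one_ne_zero).differentiableAt.hasFDerivAt).hasFDerivWithinAt)
    (fun x hx ↦ ?_) (Metric.mem_closedBall_self (half_pos hδ).le) (mem_closedBall_iff_norm.2 hw)
  rw [← dist_eq_norm, dist_comm]
  exact (h (by rw [dist_comm]; exact hx.trans_lt (half_lt_self hδ)) hz).le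

variable {𝕜 V : Type*} [NontriviallyNormedField 𝕜] [NormedAddCommGroup V] [NormedSpace 𝕜 V]
  {F : V → V}

theorem contDiff_iterate {k : WithTop ℕ∞} (hF : ContDiff 𝕜 k F) (n : ℕ) : ContDiff 𝕜 k F^[n] := by
  induction n with
  | zero => exact contDiff_id
  | succ n ih => exact ih.comp hF

theorem fderiv_iterate_add (hF : Differentiable 𝕜 F) (m n : ℕ) (z : V) :
    fderiv 𝕜 F^[m + n] z = fderiv 𝕜 F^[m] (F^[n] z) * fderiv 𝕜 F^[n] z := by
  rw [iterate_add]
  exact fderiv_comp z (hF.iterate m _) (hF.iterate n _)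

theorem fderiv_iterate_mem_pow (hF : Differentiable 𝕜 F) {Ω : Set V} (hFΩ : MapsTo F Ω Ω)
    {z : V} (hz : z ∈ Ω) (n : ℕ) : fderiv 𝕜 F^[n] z ∈ (fderiv 𝕜 F '' Ω) ^ n := by
  induction n with
  | zero => rw [iterate_zero, pow_zero, Set.mem_one, fderiv_id]; rfl
  | succ n ih =>
    rw [add_comm, fderiv_iterate_add hF, pow_add, pow_one]
    exact mul_mem_mul (mem_image_of_mem _ (hFΩ.iterate n hz)) ih

theorem fderiv_iterate_mul_of_isPeriodicPt (hF : Differentiable 𝕜 F) {p : ℕ} {z : V}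
    (hz : IsPeriodicPt F p z) (n : ℕ) : fderiv 𝕜 F^[p * n] z = fderiv 𝕜 F^[p] z ^ n := by
  induction n with
  | zero => rw [mul_zero, iterate_zero, pow_zero, fderiv_id]; rfl
  | succ n ih =>
    rw [Nat.mul_succ, add_comm, fderiv_iterate_add hF, ih, (hz.mul_const n).eq, pow_succ']

theorem spectralRadius_le_one_of_norm_pow_le {𝔸 : Type*} [NormedRing 𝔸] [NormedAlgebra 𝕜 𝔸]
    [CompleteSpace 𝔸] {a : 𝔸} {M : ℝ} (h : ∀ n : ℕ, ‖a ^ n‖ ≤ M) : spectralRadius 𝕜 a ≤ 1 := by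
  refine iSup₂_le fun k hk ↦ ?_
  suffices ‖k‖ ≤ 1 by exact_mod_cast this
  by_contra! hlt
  obtain ⟨n, hn⟩ := ((tendsto_pow_atTop_atTop_of_one_lt hlt).eventually_gt_atTop
    (M * ‖(1 : 𝔸)‖)).exists
  refine hn.not_ge ?_
  calc ‖k‖ ^ n = ‖k ^ n‖ := (norm_pow k n).symm
    _ ≤ ‖a ^ n‖ * ‖(1 : 𝔸)‖ := spectrum.norm_le_norm_mul_of_mem (spectrum.pow_mem_pow a n hk)
    _ ≤ M * ‖(1 : 𝔸)‖ := by gcongr; exact h n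

end Calculus

section AsymptoticOrbits

theorem tendsto_dist_iterate_of_tendsto_dist_iterate_mul {X : Type*} [PseudoMetricSpace X]
    {f : X → X} (hf : Continuous f) {Ω : Set X} (hΩ : IsCompact Ω) (hfΩ : MapsTo f Ω Ω) {x y : X}
    (hx : x ∈ Ω) {N : ℕ} (hN : 0 < N)
    (h : Tendsto (fun j ↦ dist (f^[N * j] x) (f^[N * j] y)) atTop (𝓝 0)) :
    Tendsto (fun n ↦ dist (f^[n] x) (f^[n] y)) atTop (𝓝 0) := by
  rw [Metric.tendsto_nhds]
  intro ε hε
  have h_close (i : ℕ) : ∀ᶠ j in atTop,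
      dist (f^[i] (f^[N * j] x)) (f^[i] (f^[N * j] y)) < ε := by
    obtain ⟨δ, hδ, h_unif⟩ := Metric.mem_uniformity_dist.1 <|
      hΩ.uniformContinuousAt_of_continuousAt _ (fun z _ ↦ (hf.iterate i).continuousAt)
        (Metric.dist_mem_uniformity hε)
    filter_upwards [h.eventually_lt_const hδ] with j hj
    exact h_unif hj (hfΩ.iterate _ hx)
  have h_div : Tendsto (· / N) atTop (atTop : Filter ℕ) := Nat.tendsto_div_const_atTop hN.ne'
  filter_upwards [h_div.eventually
    ((Finset.eventually_all (Finset.range N)).2 fun i _ ↦ h_close i)] with n hn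
  have := hn (n % N) (Finset.mem_range.2 (Nat.mod_lt n hN))
  rw [← iterate_add_apply, ← iterate_add_apply, Nat.mod_add_div] at this
  rwa [Real.dist_0_eq_abs, abs_of_nonneg dist_nonneg]

end AsymptoticOrbits

section InvariantSet

variable {V : Type*} [NormedAddCommGroup V] [NormedSpace ℝ V] [PartialOrder V]
  [IsOrderedAddMonoid V] [IsOrderedModule ℝ V] [Nontrivial V]
  {F : V → V} (hF : ContDiff ℝ 1 F) {Ω : Set V} (hFΩ : MapsTo F Ω Ω)
  (h𝒜 : IsCompactStronglyPositive (fderiv ℝ F '' Ω)) {e z : V} (he : e ∈ interior (Ici 0))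
include hF hFΩ h𝒜 he

variable [OrderClosedTopology V]

theorem exists_norm_iterate_sub_le (hΩ : IsCompact Ω) {κ : ℝ} (hκ : 0 < κ) :
    ∃ n > 0, ∃ δ > 0, ∀ z ∈ Ω, ∀ w, ‖w - z‖ ≤ δ →
      F^[n] w ∉ interior (Ici (F^[n] z)) → F^[n] z ∉ interior (Ici (F^[n] w)) →
      ‖F^[n] w - F^[n] z‖ ≤ κ * ‖fderiv ℝ F^[n] z‖ * ‖w - z‖ := by
  obtain ⟨n, hn, θ, hθ, h_lin⟩ := h𝒜.exists_pow_norm_le_of_notMem_interior he hκ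
  obtain ⟨b, hb, h_low⟩ := h𝒜.exists_le_norm_pow he n
  obtain ⟨δ, hδ, h_diff⟩ := exists_norm_sub_sub_fderiv_apply_le_of_isCompact
    (contDiff_iterate hF n) hΩ (mul_pos hθ hb)
  refine ⟨n, hn, δ, hδ, fun z hz w hw h_wz h_zw ↦ ?_⟩
  have hT := fderiv_iterate_mem_pow (hF.differentiable one_ne_zero) hFΩ hz n
  refine h_lin _ hT _ _ ((h_diff z hz w hw).trans ?_) (mt mem_interior_Ici_iff_sub.2 h_wz)
    (by rwa [neg_sub, ← mem_interior_Ici_iff_sub])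
  gcongr
  exact h_low _ hT

theorem exists_norm_fderiv_iterate_le_iterate (hz : z ∈ Ω) {M : ℝ}
    (hM : ∀ n, ‖fderiv ℝ F^[n] z‖ ≤ M) (k : ℕ) :
    ∃ M', ∀ n, ‖fderiv ℝ F^[n] (F^[k] z)‖ ≤ M' := by
  have hF' := hF.differentiable one_ne_zero
  have h_mem {w : V} (hw : w ∈ Ω) (n : ℕ) := fderiv_iterate_mem_pow hF' hFΩ hw n
  obtain ⟨c, hc, h_mul⟩ := h𝒜.exists_mul_norm_mul_norm_le_norm_mul he
  obtain ⟨b, hb, h_low⟩ := h𝒜.exists_le_norm_pow he k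
  refine ⟨M / (c * b), fun n ↦ (le_div_iff₀ (by positivity)).2 ?_⟩
  calc ‖fderiv ℝ F^[n] (F^[k] z)‖ * (c * b)
      ≤ c * (‖fderiv ℝ F^[n] (F^[k] z)‖ * ‖fderiv ℝ F^[k] z‖) := by
        rw [mul_left_comm]; gcongr; exact h_low _ (h_mem hz k)
    _ ≤ ‖fderiv ℝ F^[n] (F^[k] z) * fderiv ℝ F^[k] z‖ :=
        h_mul _ _ (h_mem (hFΩ.iterate k hz) n) _ _ (h_mem hz k)
    _ ≤ M := by rw [← fderiv_iterate_add hF']; exact hM (n + k)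

theorem exists_norm_iterate_mul_sub_le (hΩ : IsCompact Ω) (hz : z ∈ Ω) {M : ℝ}
    (hM : ∀ n, ‖fderiv ℝ F^[n] z‖ ≤ M) : ∃ N > 0, ∃ δ > 0, ∀ w, ‖w - z‖ < δ →
      (∀ n, F^[n] w ∉ interior (Ici (F^[n] z)) ∧ F^[n] z ∉ interior (Ici (F^[n] w))) →
      ∀ j, ‖F^[N * j] w - F^[N * j] z‖ ≤ (1 / 2) ^ j * (M * ‖w - z‖) := by
  have hF' := hF.differentiable one_ne_zero
  obtain ⟨c, hc, h_mul⟩ := h𝒜.exists_mul_norm_mul_norm_le_norm_mul he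
  obtain ⟨N, hN, δ, hδ, h_contr⟩ :=
    exists_norm_iterate_sub_le hF hFΩ h𝒜 he hΩ (show 0 < c / 2 by positivity)
  have hM_pos : 0 < M := zero_lt_one.trans_le (by simpa using hM 0)
  refine ⟨N, hN, δ / M, by positivity, fun w hw h_unord ↦ ?_⟩
  rw [lt_div_iff₀' hM_pos] at hw
  have h_bound (a : ℝ) (ha : 0 ≤ a) (n : ℕ) :
      a * ‖fderiv ℝ F^[n] z‖ * ‖w - z‖ ≤ a * (M * ‖w - z‖) := by
    rw [mul_assoc]; gcongr; exact hM n
  have h_decay (j : ℕ) : ‖F^[N * j] w - F^[N * j] z‖ ≤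
      (1 / 2) ^ j * ‖fderiv ℝ F^[N * j] z‖ * ‖w - z‖ := by
    induction j with
    | zero => simp
    | succ j ih =>
      have h_small : ‖F^[N * j] w - F^[N * j] z‖ ≤ δ := by
        refine (ih.trans (h_bound _ (by positivity) _)).trans (le_trans ?_ hw.le)
        exact mul_le_of_le_one_left (by positivity) (pow_le_one₀ (by norm_num) (by norm_num))
      have h_step := h_contr _ (hFΩ.iterate (N * j) hz) _ h_small
      rw [← iterate_add_apply, ← iterate_add_apply, add_comm, ← Nat.mul_succ] at h_step
      calc ‖F^[N * (j + 1)] w - F^[N * (j + 1)] z‖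
          ≤ c / 2 * ‖fderiv ℝ F^[N] (F^[N * j] z)‖ *
              ((1 / 2) ^ j * ‖fderiv ℝ F^[N * j] z‖ * ‖w - z‖) :=
            (h_step (h_unord _).1 (h_unord _).2).trans (by gcongr)
        _ = (1 / 2) ^ (j + 1) * (c * (‖fderiv ℝ F^[N] (F^[N * j] z)‖ *
              ‖fderiv ℝ F^[N * j] z‖)) * ‖w - z‖ := by ring
        _ ≤ (1 / 2) ^ (j + 1) * ‖fderiv ℝ F^[N * (j + 1)] z‖ * ‖w - z‖ := by
            gcongr
            rw [Nat.mul_succ, add_comm, fderiv_iterate_add hF']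
            exact h_mul _ _ (fderiv_iterate_mem_pow hF' hFΩ (hFΩ.iterate _ hz) N) _ _
              (fderiv_iterate_mem_pow hF' hFΩ hz _)
  exact fun j ↦ (h_decay j).trans (h_bound _ (by positivity) _)

theorem exists_tendsto_dist_iterate (hΩ : IsCompact Ω) (hz : z ∈ Ω) {M : ℝ}
    (hM : ∀ n, ‖fderiv ℝ F^[n] z‖ ≤ M) : ∃ δ > 0, ∀ w, dist w z < δ →
      (∀ n, F^[n] w ∉ interior (Ici (F^[n] z)) ∧ F^[n] z ∉ interior (Ici (F^[n] w))) →
      Tendsto (fun n ↦ dist (F^[n] z) (F^[n] w)) atTop (𝓝 0) := by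
  obtain ⟨N, hN, δ, hδ, h_decay⟩ := exists_norm_iterate_mul_sub_le hF hFΩ h𝒜 he hΩ hz hM
  refine ⟨δ, hδ, fun w hw h_unord ↦ ?_⟩
  rw [dist_eq_norm] at hw
  refine tendsto_dist_iterate_of_tendsto_dist_iterate_mul hF.continuous hΩ hFΩ hz hN ?_
  have h_geom : Tendsto (fun j : ℕ ↦ (1 / 2 : ℝ) ^ j * (M * ‖w - z‖)) atTop (𝓝 0) := by
    simpa using (tendsto_pow_atTop_nhds_zero_of_lt_one (by norm_num : (0 : ℝ) ≤ 1 / 2)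
      (by norm_num)).mul_const (M * ‖w - z‖)
  refine squeeze_zero (fun _ ↦ dist_nonneg) (fun j ↦ ?_) h_geom
  rw [dist_comm, dist_eq_norm]
  exact h_decay w hw h_unord j

end InvariantSet

section MonotoneConvergence

variable {ι α : Type*} [Preorder ι] [IsDirectedOrder ι] [Nonempty ι] [TopologicalSpace α]
  [PartialOrder α] [OrderClosedTopology α] {S : Set α} {u : ι → α}

theorem exists_tendsto_of_monotone_of_isCompact (hS : IsCompact S) (hu : Monotone u)
    (huS : ∀ i, u i ∈ S) : ∃ a, Tendsto u atTop (𝓝 a) := by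
  have h_le {b : α} (hb : MapClusterPt b atTop u) (i : ι) : u i ≤ b :=
    isClosed_Ici.mem_of_mapClusterPt hb ((eventually_ge_atTop i).mono fun _ h ↦ hu h)
  have h_ge {b c : α} (hb : MapClusterPt b atTop u) (hc : ∀ i, u i ≤ c) : b ≤ c :=
    isClosed_Iic.mem_of_mapClusterPt hb (.of_forall hc)
  obtain ⟨a, -, ha⟩ := hS.exists_mapClusterPt (f := atTop)
    (tendsto_principal.2 (.of_forall huS))
  exact ⟨a, hS.tendsto_nhds_of_unique_mapClusterPt (.of_forall huS) fun b _ hb ↦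
    (h_ge hb (h_le ha)).antisymm (h_ge ha (h_le hb))⟩

theorem exists_tendsto_of_antitone_of_isCompact (hS : IsCompact S) (hu : Antitone u)
    (huS : ∀ i, u i ∈ S) : ∃ a, Tendsto u atTop (𝓝 a) :=
  exists_tendsto_of_monotone_of_isCompact (α := αᵒᵈ) hS hu huS

end MonotoneConvergence

section OmegaSet

variable {V : Type*} [NormedAddCommGroup V] {F : V → V} {x y z : V}

theorem mem_omegaSet_iff : z ∈ omegaSet F x ↔ MapClusterPt z atTop fun n ↦ F^[n] x := by
  have h_tail (k : ℕ) : semiOrbit F (F^[k] x) = (fun n ↦ F^[n] x) '' Ici k := by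
    ext y
    simp only [semiOrbit, mem_image, mem_Ici, Set.mem_ofPred_eq, ← iterate_add_apply]
    constructor
    · rintro ⟨n, rfl⟩
      exact ⟨n + k, by omega, rfl⟩
    · rintro ⟨n, hn, rfl⟩
      exact ⟨n - k, by rw [Nat.sub_add_cancel hn]⟩
  simp [mapClusterPt_atTop_iff_forall_mem_closure, omegaSet, h_tail]

theorem isCompact_omegaSet (hx : IsCompact (closure (semiOrbit F x))) :
    IsCompact (omegaSet F x) :=
  hx.of_isClosed_subset (isClosed_iInter fun _ ↦ isClosed_closure) (iInter_subset _ 0)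

theorem tendsto_iterate_nhdsSet_omegaSet (hx : IsCompact (closure (semiOrbit F x))) :
    Tendsto (fun n ↦ F^[n] x) atTop (𝓝ˢ (omegaSet F x)) :=
  hx.tendsto_nhdsSet_of_mapClusterPt
    (.of_forall fun n ↦ subset_closure ⟨n, rfl⟩)
    fun _ _ ↦ mem_omegaSet_iff.2

theorem mapsTo_omegaSet (hF : Continuous F) : MapsTo F (omegaSet F x) (omegaSet F x) := by
  intro z hz
  rw [mem_omegaSet_iff] at hz ⊢
  refine .of_comp (tendsto_add_atTop_nat 1) ?_
  simpa only [comp_def, iterate_succ_apply'] using hz.continuousAt_comp hF.continuousAt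

theorem omegaSet_iterate (k : ℕ) : omegaSet F (F^[k] x) = omegaSet F x := by
  ext z
  simp only [mem_omegaSet_iff, MapClusterPt, ← iterate_add_apply]
  rw [← comp_def (fun n ↦ F^[n] x) (· + k), ← map_map, map_add_atTop_eq_nat]

theorem omegaSet_eq_of_tendsto_dist
    (h : Tendsto (fun n ↦ dist (F^[n] x) (F^[n] y)) atTop (𝓝 0)) :
    omegaSet F x = omegaSet F y := by
  suffices ∀ x y, Tendsto (fun n ↦ dist (F^[n] x) (F^[n] y)) atTop (𝓝 0) →
      omegaSet F x ⊆ omegaSet F y from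
    (this x y h).antisymm (this y x (by simpa only [dist_comm] using h))
  intro x y h z hz
  rw [mem_omegaSet_iff, Metric.nhds_basis_ball.mapClusterPt_iff_frequently] at hz ⊢
  intro ε hε
  refine ((hz _ (half_pos hε)).and_eventually (h.eventually_lt_const (half_pos hε))).mono
    fun n hn ↦ ?_
  rw [Metric.mem_ball] at hn ⊢
  linarith [dist_triangle_left (F^[n] y) z (F^[n] x)]

theorem omegaSet_of_mem_periodicPts (hx : x ∈ periodicPts F) : omegaSet F x = semiOrbit F x := by
  obtain ⟨p, hp, hpx⟩ := hx
  apply Subset.antisymm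
  · have h_fin : (semiOrbit F x).Finite := by
      refine ((finite_Iio p).image fun n ↦ F^[n] x).subset ?_
      rintro _ ⟨n, rfl⟩
      exact ⟨n % p, Nat.mod_lt n hp, hpx.iterate_mod_apply n⟩
    exact fun z hz ↦ h_fin.isClosed.closure_eq ▸ iInter_subset _ 0 hz
  · rintro _ ⟨m, rfl⟩
    refine mem_omegaSet_iff.2 (.of_comp (φ := fun j ↦ p * j + m)
      ((tendsto_add_atTop_nat m).comp (tendsto_id.const_mul_atTop' hp)) ?_)
    refine (tendsto_const_nhds.congr fun j ↦ ?_).mapClusterPt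
    simp only [comp_apply]
    rw [add_comm, iterate_add_apply, (hpx.mul_const j).eq]

theorem isPeriodicPt_of_tendsto_dist_iterate (hF : Continuous F) (hz : z ∈ omegaSet F z) {p : ℕ}
    (h : Tendsto (fun n ↦ dist (F^[n] z) (F^[p] (F^[n] z))) atTop (𝓝 0)) :
    IsPeriodicPt F p z := by
  have h_cluster : MapClusterPt (dist z (F^[p] z)) atTop
      fun n ↦ dist (F^[n] z) (F^[p] (F^[n] z)) :=
    (mem_omegaSet_iff.1 hz).continuousAt_comp
      (continuous_id.dist (hF.iterate p)).continuousAt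
  have : NeBot (𝓝 (dist z (F^[p] z)) ⊓ 𝓝 0) := ClusterPt.mono h_cluster h
  exact (dist_eq_zero.1 (eq_of_nhds_neBot this)).symm

end OmegaSet

section MonotoneDynamics

/-- `C` is a cycle of `F`, that is, the semi-orbit of a periodic point. Unlike
`IsLinearlyStableCycle`, this says nothing about derivatives. -/
def IsCycle {V : Type*} (F : V → V) (C : Set V) : Prop :=
  ∃ q ∈ periodicPts F, C = semiOrbit F q

theorem iterate_eq_of_le_of_mem_periodicPts {α : Type*} [PartialOrder α] {F : α → α}
    (hF : Monotone F) {q : α} (hq : q ∈ periodicPts F) {m : ℕ} (h : q ≤ F^[m] q) :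
    F^[m] q = q := by
  obtain ⟨p, hp, hpq⟩ := hq
  refine le_antisymm ?_ h
  have h_mono := (hF.iterate m).monotone_iterate_of_le_map h
  simpa [← iterate_mul, (hpq.const_mul m).eq] using h_mono (Nat.one_le_iff_ne_zero.2 hp.ne')

theorem IsCycle.mem_periodicPts {V : Type*} {F : V → V} {C : Set V} (hC : IsCycle F C) {a : V}
    (ha : a ∈ C) : a ∈ periodicPts F := by
  obtain ⟨q, ⟨p, hp, hpq⟩, rfl⟩ := hC
  obtain ⟨i, rfl⟩ := ha
  exact ⟨p, hp, hpq.apply_iterate i⟩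

theorem IsCycle.eq_semiOrbit {V : Type*} {F : V → V} {C : Set V} (hC : IsCycle F C) {a : V}
    (ha : a ∈ C) : C = semiOrbit F a := by
  obtain ⟨q, ⟨p, hp, hpq⟩, rfl⟩ := hC
  obtain ⟨i, rfl⟩ := ha
  apply Subset.antisymm
  · rintro _ ⟨l, rfl⟩
    refine ⟨l + (p - 1) * i, ?_⟩
    rw [← iterate_add_apply, add_assoc, Nat.sub_one_mul,
      Nat.sub_add_cancel (Nat.le_mul_of_pos_left i hp), iterate_add_apply, (hpq.mul_const i).eq]
  · rintro _ ⟨l, rfl⟩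
    exact ⟨l + i, by rw [iterate_add_apply]⟩

theorem IsCycle.eq_of_le {V : Type*} [PartialOrder V] {F : V → V} (hF : Monotone F) {C : Set V}
    (hC : IsCycle F C) {a b : V} (ha : a ∈ C) (hb : b ∈ C) (hab : a ≤ b) : a = b := by
  obtain ⟨m, rfl⟩ := hC.eq_semiOrbit ha ▸ hb
  exact (iterate_eq_of_le_of_mem_periodicPts hF (hC.mem_periodicPts ha) hab).symm

variable {V : Type*} [NormedAddCommGroup V] {F : V → V} {x : V}

theorem isCycle_omegaSet_of_tendsto_iterate_mul (hF : Continuous F)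
    (hx : IsCompact (omegaSet F x)) {p : ℕ} (hp : 0 < p) {q : V}
    (hq : Tendsto (fun n ↦ F^[p * n] x) atTop (𝓝 q)) : IsCycle F (omegaSet F x) := by
  have hq_per : IsPeriodicPt F p q := by
    simp_rw [iterate_mul] at hq
    exact isFixedPt_of_tendsto_iterate hq (hF.iterate p).continuousAt
  have hq_mem : q ∈ omegaSet F x :=
    mem_omegaSet_iff.2 (.of_comp (tendsto_id.const_mul_atTop' hp) hq.mapClusterPt)
  have h_asymp : Tendsto (fun n ↦ dist (F^[n] q) (F^[n] x)) atTop (𝓝 0) := by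
    refine tendsto_dist_iterate_of_tendsto_dist_iterate_mul hF hx (mapsTo_omegaSet hF) hq_mem hp ?_
    simp_rw [(hq_per.mul_const _).eq, dist_comm q]
    exact tendsto_iff_dist_tendsto_zero.1 hq
  have hq_pts : q ∈ periodicPts F := ⟨p, hp, hq_per⟩
  exact ⟨q, hq_pts, by
    rw [← omegaSet_eq_of_tendsto_dist h_asymp, omegaSet_of_mem_periodicPts hq_pts]⟩

variable [PartialOrder V] [OrderClosedTopology V]

theorem isCycle_omegaSet_of_iterate_le (hF : Continuous F) (h_mono : Monotone F)
    (hx : IsCompact (closure (semiOrbit F x))) {i j : ℕ} (hij : i ≠ j)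
    (h : F^[i] x ≤ F^[j] x) : IsCycle F (omegaSet F x) := by
  have h_mem (p k n : ℕ) : (F^[p])^[n] (F^[k] x) ∈ closure (semiOrbit F x) :=
    subset_closure ⟨p * n + k, by rw [iterate_add_apply, iterate_mul]⟩
  obtain ⟨p, hp, k, q, hq⟩ :
      ∃ p > 0, ∃ k q, Tendsto (fun n ↦ (F^[p])^[n] (F^[k] x)) atTop (𝓝 q) := by
    rcases hij.lt_or_gt with hlt | hlt
    · refine ⟨j - i, Nat.sub_pos_of_lt hlt, i, exists_tendsto_of_monotone_of_isCompact hx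
        ((h_mono.iterate _).monotone_iterate_of_le_map ?_) (h_mem _ _)⟩
      rwa [← iterate_add_apply, Nat.sub_add_cancel hlt.le]
    · refine ⟨i - j, Nat.sub_pos_of_lt hlt, j, exists_tendsto_of_antitone_of_isCompact hx
        ((h_mono.iterate _).antitone_iterate_of_map_le ?_) (h_mem _ _)⟩
      rwa [← iterate_add_apply, Nat.sub_add_cancel hlt.le]
  have h_omega : omegaSet F (F^[k] x) = omegaSet F x := omegaSet_iterate k
  rw [← h_omega]
  refine isCycle_omegaSet_of_tendsto_iterate_mul hF (h_omega ▸ isCompact_omegaSet hx) hp (q := q) ?_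
  simpa only [iterate_mul] using hq

theorem isCycle_omegaSet_of_mem_interior_Ici_iterate (hF : Continuous F) (h_mono : Monotone F)
    (hx : IsCompact (closure (semiOrbit F x))) {a : V} (ha : a ∈ omegaSet F x) {j : ℕ}
    (h : a ∈ interior (Ici (F^[j] x))) : IsCycle F (omegaSet F x) := by
  obtain ⟨n, hn, hnj⟩ := (((mem_omegaSet_iff.1 ha).frequently
    (isOpen_interior.mem_nhds h)).and_eventually (eventually_gt_atTop j)).exists
  exact isCycle_omegaSet_of_iterate_le hF h_mono hx hnj.ne (interior_subset hn)

variable [IsOrderedAddMonoid V]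

theorem isCycle_omegaSet_of_iterate_mem_interior_Ici (hF : Continuous F) (h_mono : Monotone F)
    (hx : IsCompact (closure (semiOrbit F x))) {a : V} (ha : a ∈ omegaSet F x) {j : ℕ}
    (h : F^[j] x ∈ interior (Ici a)) : IsCycle F (omegaSet F x) := by
  have h_ev : ∀ᶠ b in 𝓝 a, F^[j] x ∈ interior (Ici b) :=
    (isOpen_setOf_mem_interior_Ici.preimage (Continuous.prodMk_left (F^[j] x))).mem_nhds h
  obtain ⟨n, hn, hnj⟩ := (((mem_omegaSet_iff.1 ha).frequently h_ev).and_eventually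
    (eventually_gt_atTop j)).exists
  exact isCycle_omegaSet_of_iterate_le hF h_mono hx hnj.ne' (interior_subset hn)

theorem notMem_interior_Ici_of_mem_omegaSet [NormedSpace ℝ V] [IsOrderedModule ℝ V]
    [Nontrivial V] (hF : Continuous F) (h_mono : Monotone F)
    (hx : IsCompact (closure (semiOrbit F x))) {a b : V} (ha : a ∈ omegaSet F x)
    (hb : b ∈ omegaSet F x) : b ∉ interior (Ici a) := by
  intro hab
  obtain ⟨j, hj⟩ := ((mem_omegaSet_iff.1 hb).frequently (isOpen_interior.mem_nhds hab)).exists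
  have hC := isCycle_omegaSet_of_iterate_mem_interior_Ici hF h_mono hx ha hj
  obtain rfl := hC.eq_of_le h_mono ha hb (interior_subset hab)
  exact (lt_of_mem_interior_Ici hab).false

end MonotoneDynamics

section LinearStability

variable {V : Type*} [NormedAddCommGroup V] [NormedSpace ℝ V] [PartialOrder V]
  [IsOrderedAddMonoid V] [IsOrderedModule ℝ V] [OrderClosedTopology V] [Nontrivial V]
  {F : V → V} (hF : ContDiff ℝ 1 F) {e x z : V} (he : e ∈ interior (Ici 0))
include hF he

theorem IsCycle.isLinearlyStableCycle [CompleteSpace V] {C : Set V} (hC : IsCycle F C)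
    (h𝒜 : IsCompactStronglyPositive (fderiv ℝ F '' C)) (hz : z ∈ C) {M : ℝ}
    (hM : ∀ n, ‖fderiv ℝ F^[n] z‖ ≤ M) : IsLinearlyStableCycle F C := by
  have hz_per := hC.mem_periodicPts hz
  obtain rfl := hC.eq_semiOrbit hz
  have hFC : MapsTo F (semiOrbit F z) (semiOrbit F z) := by
    rintro _ ⟨n, rfl⟩
    exact ⟨n + 1, by rw [iterate_succ_apply']⟩
  refine ⟨z, minimalPeriod F z, ⟨minimalPeriod_pos_of_mem_periodicPts hz_per,
    isPeriodicPt_minimalPeriod F z, fun l hl hlt ↦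
      not_isPeriodicPt_of_pos_of_lt_minimalPeriod (Nat.one_le_iff_ne_zero.1 hl) hlt⟩, rfl, ?_⟩
  rintro _ ⟨k, rfl⟩
  obtain ⟨M', hM'⟩ := exists_norm_fderiv_iterate_le_iterate hF hFC h𝒜 he hz hM k
  have hF' := hF.differentiable one_ne_zero
  refine ⟨_, (hF'.iterate _ _).hasFDerivAt,
    spectralRadius_le_one_of_norm_pow_le (M := M') fun n ↦ ?_⟩
  rw [← fderiv_iterate_mul_of_isPeriodicPt hF' ((isPeriodicPt_minimalPeriod F z).apply_iterate k)]
  exact hM' _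

theorem isCycle_omegaSet_of_norm_fderiv_iterate_le (h_mono : Monotone F)
    (hx : IsCompact (closure (semiOrbit F x)))
    (h𝒜 : IsCompactStronglyPositive (fderiv ℝ F '' omegaSet F x)) (hz : z ∈ omegaSet F x) {M : ℝ}
    (hM : ∀ n, ‖fderiv ℝ F^[n] z‖ ≤ M) : IsCycle F (omegaSet F x) := by
  by_contra hC
  have hFc := hF.continuous
  have hFω : MapsTo F (omegaSet F x) (omegaSet F x) := mapsTo_omegaSet hFc
  obtain ⟨δ, hδ, h_shadow⟩ :=
    exists_tendsto_dist_iterate hF hFω h𝒜 he (isCompact_omegaSet hx) hz hM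
  replace h_shadow (j : ℕ) (hj : dist (F^[j] x) z < δ) :
      Tendsto (fun n ↦ dist (F^[n] z) (F^[n] (F^[j] x))) atTop (𝓝 0) := by
    refine h_shadow _ hj fun n ↦ ?_
    rw [← iterate_add_apply]
    exact ⟨fun h ↦ hC (isCycle_omegaSet_of_iterate_mem_interior_Ici hFc h_mono hx
      (hFω.iterate n hz) h), fun h ↦ hC (isCycle_omegaSet_of_mem_interior_Ici_iterate hFc h_mono hx
      (hFω.iterate n hz) h)⟩
  have h_freq : ∃ᶠ j in atTop, dist (F^[j] x) z < δ :=
    (mem_omegaSet_iff.1 hz).frequently (Metric.ball_mem_nhds z hδ)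
  obtain ⟨i, hi⟩ := h_freq.exists
  obtain ⟨j, hj, hij⟩ := (h_freq.and_eventually (eventually_gt_atTop i)).exists
  have h_omega : omegaSet F z = omegaSet F x :=
    (omegaSet_eq_of_tendsto_dist (h_shadow i hi)).trans (omegaSet_iterate i)
  have h_self : Tendsto (fun n ↦ dist (F^[n] z) (F^[j - i] (F^[n] z))) atTop (𝓝 0) := by
    refine squeeze_zero (fun _ ↦ dist_nonneg) (fun n ↦ dist_triangle_right _ _ (F^[n + j] x)) ?_
    have h_late := (h_shadow i hi).comp (tendsto_add_atTop_nat (j - i))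
    simp_rw [comp_def, ← iterate_add_apply, add_assoc, Nat.sub_add_cancel hij.le] at h_late
    simpa only [← iterate_add_apply, add_comm (j - i), add_zero] using (h_shadow j hj).add h_late
  have hz_pts : z ∈ periodicPts F := ⟨j - i, Nat.sub_pos_of_lt hij,
    isPeriodicPt_of_tendsto_dist_iterate hFc (h_omega ▸ hz) h_self⟩
  exact hC ⟨z, hz_pts, by rw [← h_omega, omegaSet_of_mem_periodicPts hz_pts]⟩

theorem isLinearlyStableCycle_omegaSet_of_notMem_interior [CompleteSpace V] (h_mono : Monotone F)
    (hx : IsCompact (closure (semiOrbit F x)))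
    (h𝒜 : IsCompactStronglyPositive (fderiv ℝ F '' omegaSet F x)) (hz : z ∈ omegaSet F x) {t : ℝ}
    (h : ∀ n, fderiv ℝ F^[n] z e ∉ interior (Ici (t • e))) :
    IsLinearlyStableCycle F (omegaSet F x) := by
  obtain ⟨M, hM⟩ := h𝒜.exists_norm_le_of_notMem_interior_Ici_smul he t
  replace hM (n : ℕ) : ‖fderiv ℝ F^[n] z‖ ≤ M := hM n _ (fderiv_iterate_mem_pow
    (hF.differentiable one_ne_zero) (mapsTo_omegaSet hF.continuous) hz n) (h n)
  exact (isCycle_omegaSet_of_norm_fderiv_iterate_le hF he h_mono hx h𝒜 hz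
    hM).isLinearlyStableCycle hF he h𝒜 hz hM

end LinearStability

section Expansion

theorem eventually_add_smul_le_of_hasStrictFDerivAt {V W : Type*} [NormedAddCommGroup V]
    [NormedSpace ℝ V] [NormedAddCommGroup W] [NormedSpace ℝ W] [PartialOrder W]
    [IsOrderedAddMonoid W] [IsOrderedModule ℝ W] {G : V → W} {L : V →L[ℝ] W} {z e : V} {u : W}
    (hG : HasStrictFDerivAt G L z) (h : L e ∈ interior (Ici u)) :
    ∀ᶠ p : V × ℝ in 𝓝 z ×ˢ 𝓝[>] 0, G p.1 + p.2 • u ≤ G (p.1 + p.2 • e) := by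
  have h_base : Tendsto (fun p : V × ℝ ↦ (p.1 + p.2 • e, p.1)) (𝓝 z ×ˢ 𝓝[>] 0) (𝓝 (z, z)) := by
    refine (Continuous.tendsto' (x := (z, (0 : ℝ))) (by fun_prop) _ (by simp)).mono_left ?_
    rw [nhds_prod_eq]
    exact prod_mono_right _ nhdsWithin_le_nhds
  have h_small : (fun p : V × ℝ ↦ G (p.1 + p.2 • e) - G p.1 - p.2 • L e)
      =o[𝓝 z ×ˢ 𝓝[>] 0] fun p ↦ p.2 := by
    have := hG.isLittleO.comp_tendsto h_base
    simp only [comp_def, add_sub_cancel_left, map_smul] at this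
    refine this.trans_isBigO (.of_bound ‖e‖ (.of_forall fun p ↦ ?_))
    rw [norm_smul, mul_comm]
  have h_quot := h_small.tendsto_inv_smul_nhds_zero.add_const (L e)
  rw [zero_add] at h_quot
  filter_upwards [h_quot.eventually (isOpen_interior.mem_nhds h),
    tendsto_snd.eventually self_mem_nhdsWithin] with p hp (hp_pos : 0 < p.2)
  have := smul_le_smul_of_nonneg_left (interior_subset hp : u ≤ _) hp_pos.le
  rwa [smul_add, smul_inv_smul₀ hp_pos.ne', sub_add_cancel, le_sub_iff_add_le'] at this

variable {V : Type*} [NormedAddCommGroup V] [NormedSpace ℝ V] [PartialOrder V] {F : V → V}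
  {e x y : V}

theorem exists_mem_omegaSet_add_smul_le [OrderClosedTopology V] {s₀ : ℝ}
    (hx : IsCompact (closure (semiOrbit F x))) (hy : IsCompact (closure (semiOrbit F y)))
    (h : ∃ᶠ k in atTop, F^[k] x + s₀ • e ≤ F^[k] y) :
    ∃ ζ ∈ omegaSet F x, ∃ η ∈ omegaSet F y, ζ + s₀ • e ≤ η := by
  have h_closed : IsClosed {p : V × V | p.1 + s₀ • e ≤ p.2} :=
    isClosed_le (by fun_prop) continuous_snd
  obtain ⟨⟨ζ, η⟩, hmem, hp⟩ := ((hx.prod hy).inter_right h_closed).exists_mapClusterPt_of_frequently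
    (f := fun k ↦ (F^[k] x, F^[k] y)) (h.mono fun k hk ↦
      ⟨⟨subset_closure ⟨k, rfl⟩, subset_closure ⟨k, rfl⟩⟩, hk⟩)
  exact ⟨ζ, mem_omegaSet_iff.2 (hp.continuousAt_comp continuous_fst.continuousAt),
    η, mem_omegaSet_iff.2 (hp.continuousAt_comp continuous_snd.continuousAt), hmem.2⟩

variable [IsOrderedAddMonoid V] [IsOrderedModule ℝ V]

theorem exists_forall_exists_iterate_add_two_smul_le (hF : ContDiff ℝ 1 F)
    (hx : IsCompact (closure (semiOrbit F x)))
    (h_exp : ∀ z ∈ omegaSet F x, ∃ n, fderiv ℝ F^[n] z e ∈ interior (Ici ((2 : ℝ) • e))) :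
    ∃ s₀ > (0 : ℝ), ∀ᶠ k in atTop, ∀ s ∈ Ioo 0 s₀,
      ∃ n, F^[n] (F^[k] x) + (2 * s) • e ≤ F^[n] (F^[k] x + s • e) := by
  have h_unif : ∀ᶠ p : V × ℝ in 𝓝ˢ (omegaSet F x) ×ˢ 𝓝[>] 0,
      ∃ n, F^[n] p.1 + (2 * p.2) • e ≤ F^[n] (p.1 + p.2 • e) := by
    refine (isCompact_omegaSet hx).mem_nhdsSet_prod_of_forall fun z hz ↦ ?_
    obtain ⟨n, hn⟩ := h_exp z hz
    filter_upwards [eventually_add_smul_le_of_hasStrictFDerivAt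
      ((contDiff_iterate hF n).contDiffAt.hasStrictFDerivAt one_ne_zero) hn] with p hp
    exact ⟨n, by rwa [mul_comm, mul_smul]⟩
  obtain ⟨U, hU, S, hS, hUS⟩ := eventually_prod_iff.1 h_unif
  obtain ⟨s₀, hs₀, hsub⟩ := mem_nhdsGT_iff_exists_Ioo_subset.1 hS
  refine ⟨s₀, hs₀, ?_⟩
  filter_upwards [(tendsto_iterate_nhdsSet_omegaSet hx).eventually hU] with k hk s hs
  exact hUS hk (hsub hs)

theorem frequently_iterate_add_smul_le (h_mono : Monotone F) (he : 0 ≤ e) {s₀ : ℝ}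
    (h_double : ∀ᶠ k in atTop, ∀ s ∈ Ioo 0 s₀,
      ∃ n, F^[n] (F^[k] x) + (2 * s) • e ≤ F^[n] (F^[k] x + s • e))
    (h_sep : ∃ᶠ k in atTop, ∃ s > (0 : ℝ), F^[k] x + s • e ≤ F^[k] y) :
    ∃ᶠ k in atTop, F^[k] x + s₀ • e ≤ F^[k] y := by
  obtain ⟨N, hN⟩ := eventually_atTop.1 h_double
  have h_reach (j : ℕ) : ∀ k ≥ N, ∀ s > (0 : ℝ), s₀ ≤ 2 ^ j * s → F^[k] x + s • e ≤ F^[k] y →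
      ∃ l ≥ k, F^[l] x + s₀ • e ≤ F^[l] y := by
    induction j with
    | zero =>
      intro k _ s _ hs hk
      rw [pow_zero, one_mul] at hs
      refine ⟨k, le_rfl, le_trans ?_ hk⟩
      gcongr
    | succ j ih =>
      intro k hkN s hs_pos hs hk
      rcases le_or_gt s₀ s with hle | hlt
      · refine ⟨k, le_rfl, le_trans ?_ hk⟩
        gcongr
      obtain ⟨n, hn⟩ := hN k hkN s ⟨hs_pos, hlt⟩
      obtain ⟨l, hl, hle⟩ := ih (n + k) (by omega) (2 * s) (by positivity)
        (by rwa [← mul_assoc, ← pow_succ]) (by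
          rw [iterate_add_apply, iterate_add_apply]
          exact hn.trans (h_mono.iterate n hk))
      exact ⟨l, by omega, hle⟩
  refine frequently_atTop.2 fun m ↦ ?_
  obtain ⟨k, ⟨s, hs, hle⟩, hk⟩ := (h_sep.and_eventually (eventually_ge_atTop (max m N))).exists
  obtain ⟨j, hj⟩ := pow_unbounded_of_one_lt (s₀ / s) one_lt_two
  obtain ⟨l, hl, h⟩ := h_reach j k (le_of_max_le_right hk) s hs ((div_le_iff₀ hs).1 hj.le) hle
  exact ⟨l, (le_of_max_le_left hk).trans hl, h⟩

end Expansion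

section Gap

variable {V : Type*} [NormedAddCommGroup V] [PartialOrder V] [IsOrderedAddMonoid V]

theorem coneLE_Ici_zero_iff {x y : V} : coneLE (Ici 0) x y ↔ x ≤ y :=
  sub_nonneg

theorem coneLT_Ici_zero_iff {x y : V} : coneLT (Ici 0) x y ↔ x < y :=
  (and_congr_left' coneLE_Ici_zero_iff).trans lt_iff_le_and_ne.symm

theorem coneLL_Ici_zero_iff {x y : V} : coneLL (Ici 0) x y ↔ y ∈ interior (Ici x) :=
  mem_interior_Ici_iff_sub.symm

theorem OmegaCompactIntervals.omegaCompactIn_Icc {F : V → V} {X : Set V}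
    (hω : OmegaCompactIntervals (Ici 0) F X) {a b : V} (ha : a ∈ X) (hb : b ∈ X) (hab : a ≤ b) :
    OmegaCompactIn F X (Icc a b) := by
  have : ordCC (Ici 0) a b = Icc a b :=
    Set.ext fun _ ↦ and_congr coneLE_Ici_zero_iff coneLE_Ici_zero_iff
  exact this ▸ hω a ha b hb (coneLE_Ici_zero_iff.2 hab)

variable [NormedSpace ℝ V] {F : V → V} {X : Set V} {e x : V}

theorem exists_mem_omegaPlus_add_smul_le [IsOrderedModule ℝ V] [OrderClosedTopology V]
    (he : 0 < e) (hX : IsOpen X) (hx : x ∈ X) (hxc : IsCompact (omegaSet F x)) {r s₀ : ℝ}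
    (hr : 0 < r) (h_cpt : IsCompact (closure (⋃ y ∈ Icc x (x + r • e), omegaSet F y)))
    (h_gap : ∀ᶠ t in 𝓝[>] (0 : ℝ),
      ∃ ζ ∈ omegaSet F x, ∃ η ∈ omegaSet F (x + t • e), ζ + s₀ • e ≤ η) :
    ∃ ζ ∈ omegaSet F x, ∃ η ∈ omegaPlus (Ici 0) F X x, ζ + s₀ • e ≤ η := by
  have h_ray : Tendsto (fun t : ℝ ↦ x + t • e) (𝓝[>] 0) (𝓝 x) :=
    (Continuous.tendsto' (by fun_prop) 0 x (by simp)).mono_left nhdsWithin_le_nhds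
  obtain ⟨p, hp⟩ := (show ∀ᶠ t in 𝓝[>] (0 : ℝ), ∃ p : V × V, p.1 ∈ omegaSet F x ∧
    p.2 ∈ omegaSet F (x + t • e) ∧ p.1 + s₀ • e ≤ p.2 by simpa using h_gap).choice
  have h_closed : IsClosed {p : V × V | p.1 + s₀ • e ≤ p.2} :=
    isClosed_le (by fun_prop) continuous_snd
  obtain ⟨⟨ζ, η⟩, hmem, h_cluster⟩ := ((hxc.prod h_cpt).inter_right h_closed).exists_mapClusterPt
    (f := 𝓝[>] (0 : ℝ)) (u := p) <| tendsto_principal.2 <| by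
      filter_upwards [hp, Ioc_mem_nhdsGT hr] with t ht ⟨ht_pos, htr⟩
      refine ⟨⟨ht.1, subset_closure (mem_biUnion ⟨?_, ?_⟩ ht.2.1)⟩, ht.2.2⟩
      · exact le_add_of_nonneg_right (smul_nonneg ht_pos.le he.le)
      · gcongr
  refine ⟨ζ, hmem.1.1, η, mem_iInter₂.2 fun u hu ↦ ?_, hmem.2⟩
  refine isClosed_closure.mem_of_mapClusterPt
    (h_cluster.continuousAt_comp continuous_snd.continuousAt) ?_
  have hxu : ∀ᶠ y in 𝓝 x, u ∈ interior (Ici y) :=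
    (isOpen_setOf_mem_interior_Ici.preimage (Continuous.prodMk_left u)).mem_nhds
      (coneLL_Ici_zero_iff.1 hu.2)
  filter_upwards [hp, h_ray.eventually (hX.mem_nhds hx), h_ray.eventually hxu,
    self_mem_nhdsWithin] with t ht htX htu ht_pos
  refine subset_closure (mem_biUnion ⟨htX, coneLT_Ici_zero_iff.2 ?_,
    coneLE_Ici_zero_iff.2 (interior_subset htu)⟩ ht.2.1)
  exact lt_add_of_pos_right x ((smul_nonneg (le_of_lt ht_pos) he.le).lt_of_ne'
    (smul_ne_zero (ne_of_gt ht_pos) he.ne'))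

variable [IsOrderedModule ℝ V] [Nontrivial V]

theorem StronglyMonotoneMap.strictMono (hF : StronglyMonotoneMap (Ici 0) F) : StrictMono F :=
  fun _ _ hab ↦ lt_of_mem_interior_Ici (coneLL_Ici_zero_iff.1 (hF _ _ (coneLT_Ici_zero_iff.2 hab)))

variable [OrderClosedTopology V] [CompleteSpace V]

theorem exists_forall_exists_omegaSet_add_smul_le (hF : ContDiff ℝ 1 F)
    (h_mono : StronglyMonotoneMap (Ici 0) F) (he : e ∈ interior (Ici 0))
    (hx : IsCompact (closure (semiOrbit F x)))
    (h𝒜 : IsCompactStronglyPositive (fderiv ℝ F '' omegaSet F x))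
    (h_not : ¬IsLinearlyStableCycle F (omegaSet F x)) :
    ∃ s₀ > (0 : ℝ), ∀ y, x < y → IsCompact (closure (semiOrbit F y)) →
      ∃ ζ ∈ omegaSet F x, ∃ η ∈ omegaSet F y, ζ + s₀ • e ≤ η := by
  have h_strict := h_mono.strictMono
  obtain ⟨s₀, hs₀, h_double⟩ := exists_forall_exists_iterate_add_two_smul_le (e := e) hF hx
    fun z hz ↦ not_forall_not.1 fun h ↦ h_not <|
      isLinearlyStableCycle_omegaSet_of_notMem_interior hF he h_strict.monotone hx h𝒜 hz h
  refine ⟨s₀, hs₀, fun y hxy hy ↦ exists_mem_omegaSet_add_smul_le hx hy ?_⟩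
  refine frequently_iterate_add_smul_le h_strict.monotone (interior_subset he) h_double ?_
  refine (eventually_gt_atTop 0).frequently.mono fun k hk ↦ ?_
  obtain ⟨k, rfl⟩ := Nat.exists_eq_succ_of_ne_zero hk.ne'
  simp_rw [iterate_succ_apply']
  exact exists_add_smul_le_of_mem_interior_Ici e <| coneLL_Ici_zero_iff.1 <|
    h_mono _ _ (coneLT_Ici_zero_iff.2 (h_strict.iterate k hxy))

end Gap

section ConeOrder

variable {V : Type*} [NormedAddCommGroup V] {K X : Set V} {F : V → V}

theorem coneLE_neg_iff {x y : V} : coneLE (-K) x y ↔ coneLE K y x := by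
  rw [coneLE, Set.mem_neg, neg_sub, coneLE]

theorem coneLT_neg_iff {x y : V} : coneLT (-K) x y ↔ coneLT K y x :=
  and_congr coneLE_neg_iff ne_comm

theorem interior_neg_eq (s : Set V) : interior (-s) = -interior s :=
  ((Homeomorph.neg V).preimage_interior s).symm

theorem coneLL_neg_iff {x y : V} : coneLL (-K) x y ↔ coneLL K y x := by
  rw [coneLL, interior_neg_eq, Set.mem_neg, neg_sub, coneLL]

theorem ordCC_neg (a b : V) : ordCC (-K) a b = ordCC K b a := by
  ext z
  exact (and_congr coneLE_neg_iff coneLE_neg_iff).trans and_comm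

theorem omegaPlus_neg (K : Set V) (F : V → V) (X : Set V) (x : V) :
    omegaPlus (-K) F X x = omegaMinus K F X x := by
  simp only [omegaPlus, omegaMinus, coneLE_neg_iff, coneLT_neg_iff, coneLL_neg_iff]

theorem StronglyMonotoneMap.neg (hF : StronglyMonotoneMap K F) : StronglyMonotoneMap (-K) F :=
  fun x y hxy ↦ coneLL_neg_iff.2 (hF y x (coneLT_neg_iff.1 hxy))

theorem OmegaCompactIntervals.neg (hω : OmegaCompactIntervals K F X) :
    OmegaCompactIntervals (-K) F X :=
  fun a ha b hb hab ↦ ordCC_neg (K := K) a b ▸ hω b hb a ha (coneLE_neg_iff.1 hab)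

variable [NormedSpace ℝ V]

theorem IsConeOrder.neg (hK : IsConeOrder K) : IsConeOrder (-K) := by
  obtain ⟨h_closed, h_convex, h_smul, h_add, h_inter⟩ := hK
  refine ⟨h_closed.neg, h_convex.neg, fun v hv t ht ↦ ?_, fun v hv w hw ↦ ?_, ?_⟩
  · simpa using h_smul _ hv t ht
  · simpa [add_comm] using h_add _ hv _ hw
  · rwa [neg_neg, inter_comm]

theorem SmoothStronglyPositive.neg (hF : SmoothStronglyPositive K F) :
    SmoothStronglyPositive (-K) F := by
  obtain ⟨F', h_cont, h_deriv, h_cpt, h_pos⟩ := hF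
  refine ⟨F', h_cont, h_deriv, h_cpt, fun x v hv ↦ ?_⟩
  have := h_pos x (-v) (by simpa [coneLT, coneLE, eq_comm] using hv)
  simpa [coneLL, interior_neg_eq] using this

theorem IsConeOrder.exists_partialOrder (hK : IsConeOrder K) : ∃ _ : PartialOrder V,
    IsOrderedAddMonoid V ∧ IsOrderedModule ℝ V ∧ OrderClosedTopology V ∧ Ici 0 = K := by
  obtain ⟨h_closed, -, h_smul, h_add, h_inter⟩ := hK
  have h_zero : (0 : V) ∈ K := (h_inter.ge rfl).1
  let C : AddGroupCone V :=
    { carrier := K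
      zero_mem' := h_zero
      add_mem' := fun ha hb ↦ h_add _ ha _ hb
      eq_zero_of_mem_of_neg_mem' := fun ha hna ↦ h_inter.le ⟨ha, hna⟩ }
  let : PartialOrder V := .mkOfAddGroupCone C
  have h_le (a b : V) : a ≤ b ↔ b - a ∈ K := Iff.rfl
  have h_group : IsOrderedAddMonoid V := .mkOfCone C
  refine ⟨inferInstance, h_group, .of_smul_nonneg fun t ht v hv ↦ ?_, ⟨?_⟩, ?_⟩
  · rcases ht.eq_or_lt with rfl | ht
    · rw [zero_smul]
    · rw [h_le, sub_zero] at hv ⊢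
      exact h_smul v hv t ht
  · exact h_closed.preimage (continuous_snd.sub continuous_fst)
  · ext v
    rw [mem_Ici, h_le, sub_zero]

theorem isLinearlyStableCycle_omegaSet_of_subsingleton [Subsingleton V] (F : V → V) (x : V) :
    IsLinearlyStableCycle F (omegaSet F x) := by
  refine ⟨x, 1, ⟨le_rfl, Subsingleton.elim _ _, by omega⟩,
    omegaSet_of_mem_periodicPts ⟨1, one_pos, Subsingleton.elim _ _⟩, fun z _ ↦ ⟨0, ?_, ?_⟩⟩
  · exact hasFDerivAt_of_subsingleton _ _
  · simp

theorem SmoothStronglyPositive.contDiff (hF : SmoothStronglyPositive K F) : ContDiff ℝ 1 F := by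
  obtain ⟨F', h_cont, h_deriv, -⟩ := hF
  refine contDiff_one_iff_fderiv.2 ⟨fun z ↦ (h_deriv z).differentiableAt, ?_⟩
  exact h_cont.congr fun z ↦ (h_deriv z).fderiv.symm

theorem SmoothStronglyPositive.isCompactStronglyPositive [PartialOrder V] [IsOrderedAddMonoid V]
    (hF : SmoothStronglyPositive (Ici 0) F) {Ω : Set V} (hΩ : IsCompact Ω) :
    IsCompactStronglyPositive (fderiv ℝ F '' Ω) := by
  have h_image := hΩ.image (hF.contDiff.continuous_fderiv one_ne_zero)
  obtain ⟨F', -, h_deriv, h_cpt, h_pos⟩ := hF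
  have h_eq : fderiv ℝ F = F' := funext fun z ↦ (h_deriv z).fderiv
  rw [h_eq] at h_image ⊢
  exact ⟨h_image, forall_mem_image.2 fun z _ ↦ h_cpt z, forall_mem_image.2 fun z _ v hv ↦
    coneLL_Ici_zero_iff.1 (h_pos z v (coneLT_Ici_zero_iff.2 hv))⟩

theorem omegaPlus_ne_omegaSet [CompleteSpace V] (hK : IsConeOrder K)
    (hKint : (interior K).Nonempty) (h_mono : StronglyMonotoneMap K F) (hX : IsOpen X)
    (hω : OmegaCompactIntervals K F X) (hF : SmoothStronglyPositive K F) {x : V} (hx : x ∈ X)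
    (h_not : ¬IsLinearlyStableCycle F (omegaSet F x)) : omegaPlus K F X x ≠ omegaSet F x := by
  intro h_eq
  have : Nontrivial V := not_subsingleton_iff_nontrivial.1 fun _ ↦
    h_not (isLinearlyStableCycle_omegaSet_of_subsingleton F x)
  obtain ⟨_, _, _, _, rfl⟩ := hK.exists_partialOrder
  obtain ⟨e, he⟩ := hKint
  have h_lt {t : ℝ} (ht : 0 < t) : x < x + t • e := lt_add_of_pos_right x
    (pos_of_mem_interior_Ici_zero (smul_mem_interior_Ici_zero ht he))
  have h_orbit {y : V} (hy : y ∈ X) (hxy : x ≤ y) : IsCompact (closure (semiOrbit F y)) :=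
    ((hω.omegaCompactIn_Icc hx hy hxy).1 y ⟨hxy, le_rfl⟩).1
  have hxc := h_orbit hx le_rfl
  obtain ⟨s₀, hs₀, h_gap⟩ := exists_forall_exists_omegaSet_add_smul_le hF.contDiff h_mono he hxc
    (hF.isCompactStronglyPositive (isCompact_omegaSet hxc)) h_not
  have h_ray : ∀ᶠ t in 𝓝[>] (0 : ℝ), x + t • e ∈ X :=
    ((Continuous.tendsto' (by fun_prop) 0 x (by simp)).mono_left nhdsWithin_le_nhds).eventually
      (hX.mem_nhds hx)
  obtain ⟨r, hrX, hr⟩ := (h_ray.and self_mem_nhdsWithin).exists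
  obtain ⟨ζ, hζ, η, hη, hle⟩ := exists_mem_omegaPlus_add_smul_le (s₀ := s₀)
    (pos_of_mem_interior_Ici_zero he) hX hx (isCompact_omegaSet hxc) hr
    (hω.omegaCompactIn_Icc hx hrX (h_lt hr).le).2.1 <| by
      filter_upwards [h_ray, self_mem_nhdsWithin] with t htX ht
      exact h_gap _ (h_lt ht) (h_orbit htX (h_lt ht).le)
  refine notMem_interior_Ici_of_mem_omegaSet hF.contDiff.continuous h_mono.strictMono.monotone hxc
    hζ (h_eq ▸ hη) (mem_interior_Ici_of_le (mem_interior_Ici_iff_sub.2 ?_) hle)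
  rw [add_sub_cancel_left]
  exact smul_mem_interior_Ici_zero hs₀ he

end ConeOrder

theorem complement_subset_unstable_general {V : Type*} [NormedAddCommGroup V] [NormedSpace ℝ V]
    [CompleteSpace V] (K : Set V) (F : V → V) (X : Set V) (hK : IsConeOrder K)
    (hKint : (interior K).Nonempty) (hFm : StronglyMonotoneMap K F) (hXopen : IsOpen X)
    (hωc : OmegaCompactIntervals K F X) (hH3 : SmoothStronglyPositive K F) :
    X \ {x ∈ X | IsLinearlyStableCycle F (omegaSet F x)} ⊆
      Uplus K F X ∩ Uminus K F X := by
  rintro x ⟨hx, h_not⟩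
  replace h_not : ¬IsLinearlyStableCycle F (omegaSet F x) := fun h ↦ h_not ⟨hx, h⟩
  refine ⟨⟨hx, omegaPlus_ne_omegaSet hK hKint hFm hXopen hωc hH3 hx h_not⟩, hx, ?_⟩
  rw [← omegaPlus_neg]
  exact omegaPlus_ne_omegaSet hK.neg (interior_neg_eq K ▸ hKint.neg) hFm.neg hXopen hωc.neg hH3.neg
    hx h_not

/-- Claim in the proof of Theorem A: under (H1)–(H3), every point of `X` whose ω-limit
set is not a linearly stable cycle lies in `U₊ ∩ U₋`. -/
theorem complement_subset_unstable [CompleteSpace E] [TopologicalSpace.SeparableSpace E]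
    (K : Set E) (F : E → E) (X : Set E)
    -- (H1)
    (hK : IsConeOrder K) (hKint : (interior K).Nonempty)
    (hFc : Continuous F) (hFm : StronglyMonotoneMap K F)
    -- (H2)
    (hXopen : IsOpen X) (hXoc : OrderConvexSet K X) (hXinv : Set.MapsTo F X X)
    (hωc : OmegaCompactIntervals K F X)
    -- (H3)
    (hH3 : SmoothStronglyPositive K F) :
    X \ {x ∈ X | IsLinearlyStableCycle F (omegaSet F x)} ⊆
      Uplus K F X ∩ Uminus K F X := by
  exact complement_subset_unstable_general K F X hK hKint hFm hXopen hωc hH3
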